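/- arXiv:math/0301260 — 3 statements merged into one kernel-verified Lean document; each statement's English description precedes it below -/
import Mathlib

section
/- There is a constant C > 0 such that for every Schwartz function g : ℝ³ → ℂ and every y ∈ ℝ³, | ∫_{ℝ³} Im( conj(g(x)) ∇g(x) ) · (x−y)/|x−y| dx | ≤ C ‖g‖²_{Ḣ^{1/2}(ℝ³)}. -/
open MeasureTheory Real Complex Filter
open scoped FourierTransform ContDiff ENNReal

noncomputable section

abbrev E3 := EuclideanSpace ℝ (Fin 3)

/-- the `i`-th standard basis vector of `ℝ³`. -/
def e3 (i : Fin 3) : E3 := EuclideanSpace.single i (1 : ℝ)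

/-- the `i`-th spatial partial derivative. -/
def pd (g : E3 → ℂ) (i : Fin 3) (x : E3) : ℂ := fderiv ℝ g x (e3 i)

/-- the (spatial) Laplacian. -/
def lap (g : E3 → ℂ) (x : E3) : ℂ := ∑ i : Fin 3, fderiv ℝ (fun y => pd g i y) x (e3 i)

/-- the antiderivative `F(z) = ∫₀^z f(s) ds` of `f`. -/
def Fa (f : ℝ → ℝ) (z : ℝ) : ℝ := ∫ s in (0:ℝ)..z, f s

/-- `u` is a smooth decaying solution of the gNLS `i ∂ₜ u + α Δ u = μ f(|u|²) u`
on `[0,T] × ℝ³`: it is jointly smooth, every time derivative slice is a Schwartz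
function of `x`, and the equation holds pointwise on `[0,T] × ℝ³`. -/
structure IsSolution (α μ : ℝ) (f : ℝ → ℝ) (T : ℝ) (u : ℝ → E3 → ℂ) : Prop where
  smooth : ContDiff ℝ ∞ (fun p : ℝ × E3 => u p.1 p.2)
  schwartz : ∀ (k : ℕ) (t : ℝ), ∃ g : SchwartzMap E3 ℂ,
      ∀ x, iteratedDeriv k (fun s => u s x) t = g x
  eqn : ∀ t ∈ Set.Icc (0:ℝ) T, ∀ x : E3,
      Complex.I * deriv (fun s => u s x) t + (α : ℂ) * lap (u t) x
        = ((μ * f (Complex.normSq (u t x)) : ℝ) : ℂ) * u t x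

/-- the `i`-th component of the mass current `Im (conj u ∇u)`. -/
def massCur (g : E3 → ℂ) (i : Fin 3) (x : E3) : ℝ := ((starRingEnd ℂ) (g x) * pd g i x).im

/-- the Morawetz action centered at `y`. -/
def morAction (g : E3 → ℂ) (y : E3) : ℝ :=
  ∫ x : E3, ∑ i : Fin 3, massCur g i x * ((x i - y i) / ‖x - y‖)

/-- `|∇̸_y g(x)|²`, the squared norm of the angular part of the gradient. -/
def angGradSq (g : E3 → ℂ) (y x : E3) : ℝ :=
  ∑ i : Fin 3, Complex.normSq (pd g i x -
    (((x i - y i) / ‖x - y‖ : ℝ) : ℂ) *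
      ∑ j : Fin 3, (((x j - y j) / ‖x - y‖ : ℝ) : ℂ) * pd g j x)

/-- squared homogeneous Sobolev norm `‖g‖²_{Ḣ^σ}`. -/
def sobSq (σ : ℝ) (g : E3 → ℂ) : ℝ := ∫ ξ : E3, ‖ξ‖ ^ (2 * σ) * ‖𝓕 g ξ‖ ^ 2

/-!
For `X x = (x - y) / |x - y|` the Morawetz action is `Im B(g, g)`, where `B(u, v) = ⟨u, (X · ∇) v⟩`.
Since `|X| ≤ 1`, the form `B` is bounded on `L² × Ḣ¹`. Integrating by parts, `B(u, v)` equals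
`-conj B(v, u) - ⟨u, (div X) v⟩`, and `div X = (d - 1) / |x - y|` is controlled by Hardy's
inequality, so `B` is bounded on `Ḣ¹ × L²` as well. The bound on `Ḣ^{1/2}` follows by real
interpolation made explicit: writing `P_R` for the smooth frequency cutoff at `R`, the differences
`B(P_{2R} g, P_{2R} g) - B(P_R g, P_R g)` along the dyadic `R` are each bounded by the part of
`‖g‖²_{Ḣ^{1/2}}` near the frequency `R`, and they telescope. The singularity of `X` is avoided by
working with `|x - y|² + δ` and letting `δ → 0`, all bounds being uniform in `δ`.
-/

open scoped ComplexConjugate SchwartzMap Topology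

section L2

variable {α G H : Type*} [MeasurableSpace α] {μ : Measure α} [NormedAddCommGroup G]
  [NormedAddCommGroup H]

lemma lpNorm_two_eq_sqrt {f : α → G} (hf : AEStronglyMeasurable f μ) :
    lpNorm f 2 μ = √(∫ x, ‖f x‖ ^ 2 ∂μ) := by
  simp [lpNorm_eq_integral_norm_rpow_toReal two_ne_zero ENNReal.ofNat_ne_top hf, sqrt_eq_rpow]

lemma lpNorm_two_sq {f : α → G} (hf : AEStronglyMeasurable f μ) :
    lpNorm f 2 μ ^ 2 = ∫ x, ‖f x‖ ^ 2 ∂μ := by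
  rw [lpNorm_two_eq_sqrt hf, sq_sqrt (integral_nonneg fun _ ↦ by positivity)]

lemma integral_norm_mul_norm_le_lpNorm_two {f : α → G} {g : α → H} (hf : MemLp f 2 μ)
    (hg : MemLp g 2 μ) : ∫ x, ‖f x‖ * ‖g x‖ ∂μ ≤ lpNorm f 2 μ * lpNorm g 2 μ := by
  simpa [lpNorm_two_eq_sqrt hf.1, lpNorm_two_eq_sqrt hg.1, sqrt_eq_rpow] using
    integral_mul_norm_le_Lp_mul_Lq (p := 2) (q := 2) .two_two (f := fun x ↦ ‖f x‖)
      (g := fun x ↦ ‖g x‖) (by simpa using hf.norm) (by simpa using hg.norm)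

end L2

section Symbols

/-- The radial profile `R² / (R² + s²)` of the Fourier symbol of the resolvent `(1 - Δ/(2πR)²)⁻¹`,
which serves as a smooth cutoff to the frequencies `‖ξ‖ ≲ R`. -/
def resolventSymbol (R s : ℝ) : ℝ := R ^ 2 / (R ^ 2 + s ^ 2)

/-- Half the harmonic mean of `R` and `s`: it increases to `s` as `R → ∞`, and its increment from
`R` to `2R` is concentrated at `s ∼ R`. -/
def saturation (R s : ℝ) : ℝ := R * s / (R + s)

variable {R s : ℝ}

lemma resolventSymbol_nonneg : 0 ≤ resolventSymbol R s := by
  unfold resolventSymbol; positivity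

lemma one_sub_resolventSymbol (hR : R ≠ 0) : 1 - resolventSymbol R s = s ^ 2 / (R ^ 2 + s ^ 2) := by
  rw [resolventSymbol, one_sub_div (by positivity), add_sub_cancel_left]

lemma resolventSymbol_le_one : resolventSymbol R s ≤ 1 :=
  div_le_one_of_le₀ (le_add_of_nonneg_right (sq_nonneg s)) (by positivity)

lemma mul_resolventSymbol_le (hR : 0 < R) : s * resolventSymbol R s ≤ R := by
  rw [resolventSymbol, mul_div_assoc', div_le_iff₀ (by positivity)]
  nlinarith [mul_nonneg hR.le (sq_nonneg (R - s)), mul_nonneg hR.le (sq_nonneg (R + s))]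

lemma one_sub_resolventSymbol_le (hR : 0 < R) (hs : 0 ≤ s) : 1 - resolventSymbol R s ≤ R⁻¹ * s := by
  rw [one_sub_resolventSymbol hR.ne', inv_mul_eq_div, div_le_div_iff₀ (by positivity) hR]
  nlinarith [sq_nonneg (R - s), mul_nonneg hR.le hs]

lemma saturation_nonneg (hR : 0 < R) (hs : 0 ≤ s) : 0 ≤ saturation R s := by
  unfold saturation; positivity

lemma saturation_le (hR : 0 < R) (hs : 0 ≤ s) : saturation R s ≤ s := by
  rw [saturation, div_le_iff₀ (by positivity)]
  nlinarith [sq_nonneg s]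

lemma resolventSymbol_sub_sq_le (hR : 0 < R) :
    (resolventSymbol (2 * R) s - resolventSymbol R s) ^ 2 ≤ 1 - resolventSymbol R s := by
  have hmono : resolventSymbol R s ≤ resolventSymbol (2 * R) s := by
    rw [resolventSymbol, resolventSymbol, div_le_div_iff₀ (by positivity) (by positivity)]
    nlinarith [mul_nonneg (sq_nonneg R) (sq_nonneg s)]
  nlinarith [resolventSymbol_le_one (R := 2 * R) (s := s), resolventSymbol_nonneg (R := R) (s := s)]

lemma resolventSymbol_two_mul_le (hR : 0 < R) :
    resolventSymbol (2 * R) s ≤ 4 * resolventSymbol R s := by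
  rw [resolventSymbol, resolventSymbol, mul_pow, mul_div_assoc']
  norm_num only
  gcongr
  nlinarith [sq_nonneg R]

lemma saturation_two_mul_sub (hR : 0 < R) (hs : 0 ≤ s) :
    saturation (2 * R) s - saturation R s = R * s ^ 2 / ((2 * R + s) * (R + s)) := by
  unfold saturation
  field_simp
  ring

lemma mul_one_sub_resolventSymbol_le (hR : 0 < R) (hs : 0 ≤ s) :
    R * (1 - resolventSymbol R s) ≤ 4 * (saturation (2 * R) s - saturation R s) := by
  rw [one_sub_resolventSymbol hR.ne', saturation_two_mul_sub hR hs, mul_div_assoc', mul_div_assoc',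
    div_le_div_iff₀ (by positivity) (by positivity)]
  have : (2 * R + s) * (R + s) ≤ 4 * (R ^ 2 + s ^ 2) := by
    nlinarith [sq_nonneg (R - s), sq_nonneg R, sq_nonneg s]
  nlinarith [mul_le_mul_of_nonneg_left this (by positivity : 0 ≤ R * s ^ 2)]

lemma resolventSymbol_dyadic_le (hR : 0 < R) (hs : 0 ≤ s) :
    R * (resolventSymbol (2 * R) s - resolventSymbol R s) ^ 2 +
        R⁻¹ * (s ^ 2 * (resolventSymbol (2 * R) s ^ 2 + resolventSymbol R s ^ 2)) ≤
      24 * (saturation (2 * R) s - saturation R s) := by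
  have hlow : R⁻¹ * (s ^ 2 * resolventSymbol R s) = R * (1 - resolventSymbol R s) := by
    rw [one_sub_resolventSymbol hR.ne', resolventSymbol]
    field_simp
  have hsq (r : ℝ) : resolventSymbol r s ^ 2 ≤ resolventSymbol r s :=
    pow_le_of_le_one resolventSymbol_nonneg resolventSymbol_le_one two_ne_zero
  calc R * (resolventSymbol (2 * R) s - resolventSymbol R s) ^ 2 +
        R⁻¹ * (s ^ 2 * (resolventSymbol (2 * R) s ^ 2 + resolventSymbol R s ^ 2))
      ≤ R * (1 - resolventSymbol R s) +
        R⁻¹ * (s ^ 2 * (4 * resolventSymbol R s + resolventSymbol R s)) := by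
        gcongr
        · exact resolventSymbol_sub_sq_le hR
        · exact (hsq _).trans (resolventSymbol_two_mul_le hR)
        · exact hsq _
    _ = 6 * (R * (1 - resolventSymbol R s)) := by linear_combination 5 * hlow
    _ ≤ 24 * (saturation (2 * R) s - saturation R s) := by
        linarith [mul_one_sub_resolventSymbol_le hR hs]

lemma hasTemperateGrowth_resolventSymbol_norm (E : Type*) [NormedAddCommGroup E]
    [InnerProductSpace ℝ E] (hR : R ≠ 0) :
    (fun ξ : E ↦ resolventSymbol R ‖ξ‖).HasTemperateGrowth := by
  have hsymbol : (fun ξ : E ↦ resolventSymbol R ‖ξ‖) =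
      (fun η : E ↦ (1 + ‖η‖ ^ 2) ^ (-1 : ℝ)) ∘ (R⁻¹ • ContinuousLinearMap.id ℝ E) := by
    ext ξ
    simp only [resolventSymbol, Function.comp_apply, smul_apply,
      ContinuousLinearMap.id_apply, norm_smul, rpow_neg_one, mul_pow, norm_inv, inv_pow,
      Real.norm_eq_abs, sq_abs]
    field_simp
  rw [hsymbol]
  exact (Function.hasTemperateGrowth_one_add_norm_sq_rpow E _).comp (by fun_prop)

end Symbols

section HomSobolevNorm

variable {E F : Type*} [NormedAddCommGroup E] [InnerProductSpace ℝ E] [FiniteDimensional ℝ E]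
  [MeasurableSpace E] [BorelSpace E] [NormedAddCommGroup F] [NormedSpace ℂ F]

lemma integrable_norm_rpow_mul_norm_sq (u : 𝓢(E, F)) {r : ℝ} (hr : 0 ≤ r) :
    Integrable fun x ↦ ‖x‖ ^ r * ‖u x‖ ^ 2 := by
  set w : 𝓢(E, F) := SchwartzMap.smulLeftCLM F (fun x : E ↦ (1 + ‖x‖ ^ 2) ^ (r / 2)) u with hw
  have hwu : Integrable fun x ↦ ‖w x‖ * ‖u x‖ := (w.memLp 2).norm.integrable_mul (u.memLp 2).norm
  have hmeas : AEStronglyMeasurable (fun x ↦ ‖x‖ ^ r * ‖u x‖ ^ 2) volume :=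
    ((continuous_norm.rpow_const fun _ ↦ .inr hr).mul
      (u.continuous.norm.pow 2)).aestronglyMeasurable
  refine hwu.mono' hmeas (.of_forall fun x ↦ ?_)
  have hxr : ‖x‖ ^ r ≤ (1 + ‖x‖ ^ 2) ^ (r / 2) := by
    calc ‖x‖ ^ r = (‖x‖ ^ 2) ^ (r / 2) := by
          rw [← rpow_natCast_mul (norm_nonneg x)]; congr 1; push_cast; ring
      _ ≤ (1 + ‖x‖ ^ 2) ^ (r / 2) := by gcongr; linarith
  rw [hw, SchwartzMap.smulLeftCLM_apply_apply
    (Function.hasTemperateGrowth_one_add_norm_sq_rpow E _), norm_smul, norm_mul, norm_pow,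
    norm_norm, norm_of_nonneg (by positivity), norm_of_nonneg (by positivity), sq, ← mul_assoc]
  gcongr

lemma fourier_sub_apply (u v : 𝓢(E, F)) (ξ : E) : 𝓕 (u - v) ξ = 𝓕 u ξ - 𝓕 v ξ :=
  DFunLike.congr_fun (map_sub (FourierTransform.fourierCLM ℂ 𝓢(E, F)) u v) ξ

/-- The homogeneous Sobolev norm `‖u‖_{Ḣ^s}` of a Schwartz function. For `s ≤ -dim E / 2` the
integral may diverge, and the value is then `0`. -/
def homSobolevNorm (s : ℝ) (u : 𝓢(E, F)) : ℝ := √(∫ ξ : E, ‖ξ‖ ^ (2 * s) * ‖𝓕 u ξ‖ ^ 2)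

lemma homSobolevNorm_nonneg (s : ℝ) (u : 𝓢(E, F)) : 0 ≤ homSobolevNorm s u := sqrt_nonneg _

lemma homSobolevNorm_sq (s : ℝ) (u : 𝓢(E, F)) :
    homSobolevNorm s u ^ 2 = ∫ ξ : E, ‖ξ‖ ^ (2 * s) * ‖𝓕 u ξ‖ ^ 2 :=
  sq_sqrt (integral_nonneg fun _ ↦ by positivity)

lemma homSobolevNorm_zero_sq (u : 𝓢(E, F)) : homSobolevNorm 0 u ^ 2 = ∫ ξ : E, ‖𝓕 u ξ‖ ^ 2 := by
  simp [homSobolevNorm_sq]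

lemma homSobolevNorm_half_sq (u : 𝓢(E, F)) :
    homSobolevNorm (1 / 2) u ^ 2 = ∫ ξ : E, ‖ξ‖ * ‖𝓕 u ξ‖ ^ 2 := by
  simp [homSobolevNorm_sq]

lemma homSobolevNorm_one_sq (u : 𝓢(E, F)) :
    homSobolevNorm 1 u ^ 2 = ∫ ξ : E, ‖ξ‖ ^ 2 * ‖𝓕 u ξ‖ ^ 2 := by
  simp [homSobolevNorm_sq]

lemma homSobolevNorm_zero_right (s : ℝ) : homSobolevNorm s (0 : 𝓢(E, F)) = 0 := by
  simp [homSobolevNorm]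

lemma homSobolevNorm_le_mul {r s c : ℝ} (hr : 0 ≤ r) (hc : 0 ≤ c) {u v : 𝓢(E, F)}
    (h : ∀ ξ, ‖ξ‖ ^ s * ‖𝓕 v ξ‖ ≤ c * (‖ξ‖ ^ r * ‖𝓕 u ξ‖)) :
    homSobolevNorm s v ≤ c * homSobolevNorm r u := by
  refine le_of_sq_le_sq ?_ (mul_nonneg hc (homSobolevNorm_nonneg r u))
  rw [mul_pow, homSobolevNorm_sq, homSobolevNorm_sq, ← integral_const_mul]
  refine integral_mono_of_nonneg (.of_forall fun ξ ↦ by positivity)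
    ((integrable_norm_rpow_mul_norm_sq _ (by positivity)).const_mul _) (.of_forall fun ξ ↦ ?_)
  have hsq := pow_le_pow_left₀ (by positivity) (h ξ) 2
  simpa only [mul_pow, ← rpow_mul_natCast (norm_nonneg ξ), Nat.cast_ofNat,
    mul_comm _ (2 : ℝ)] using hsq

end HomSobolevNorm

section Interpolation

variable {E F : Type*} [NormedAddCommGroup E] [InnerProductSpace ℝ E] [FiniteDimensional ℝ E]
  [MeasurableSpace E] [BorelSpace E] [NormedAddCommGroup F] [NormedSpace ℂ F]

/-- The integral `∫ saturation R ‖ξ‖ * ‖𝓕 u ξ‖²`, which is `‖u‖²_{Ḣ^{1/2}}` with the frequencies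
`‖ξ‖ ≳ R` damped; differences of its values localise `‖u‖²_{Ḣ^{1/2}}` to frequency bands. -/
def saturatedEnergy (R : ℝ) (u : 𝓢(E, F)) : ℝ := ∫ ξ : E, saturation R ‖ξ‖ * ‖𝓕 u ξ‖ ^ 2

lemma saturatedEnergy_nonneg {R : ℝ} (hR : 0 < R) (u : 𝓢(E, F)) : 0 ≤ saturatedEnergy R u :=
  integral_nonneg fun ξ ↦ mul_nonneg (saturation_nonneg hR (norm_nonneg ξ)) (sq_nonneg _)

lemma saturatedEnergy_le_homSobolevNorm_sq {R : ℝ} (hR : 0 < R) (u : 𝓢(E, F)) :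
    saturatedEnergy R u ≤ homSobolevNorm (1 / 2) u ^ 2 := by
  rw [homSobolevNorm_half_sq]
  refine integral_mono_of_nonneg (.of_forall fun ξ ↦ ?_)
    (by simpa using integrable_norm_rpow_mul_norm_sq (𝓕 u) zero_le_one) (.of_forall fun ξ ↦ ?_)
  · exact mul_nonneg (saturation_nonneg hR (norm_nonneg ξ)) (sq_nonneg _)
  · exact mul_le_mul_of_nonneg_right (saturation_le hR (norm_nonneg ξ)) (sq_nonneg _)

lemma integrable_saturation_mul_norm_sq {R : ℝ} (hR : 0 < R) (u : 𝓢(E, F)) :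
    Integrable fun ξ ↦ saturation R ‖ξ‖ * ‖u ξ‖ ^ 2 := by
  unfold saturation
  have hmeas : Continuous fun ξ ↦ R * ‖ξ‖ / (R + ‖ξ‖) * ‖u ξ‖ ^ 2 := by
    have := u.continuous
    fun_prop (disch := intro; positivity)
  refine (integrable_norm_rpow_mul_norm_sq u zero_le_one).mono' hmeas.aestronglyMeasurable
    (.of_forall fun ξ ↦ ?_)
  rw [norm_of_nonneg (by positivity), rpow_one]
  exact mul_le_mul_of_nonneg_right (saturation_le hR (norm_nonneg ξ)) (sq_nonneg _)

/-- The Fourier multiplier operator with symbol `R² / (R² + ‖ξ‖²)`. -/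
def resolventCutoff (R : ℝ) (u : 𝓢(E, F)) : 𝓢(E, F) :=
  SchwartzMap.fourierMultiplierCLM F (fun ξ ↦ resolventSymbol R ‖ξ‖) u

variable [CompleteSpace F] {R : ℝ}

lemma fourier_resolventCutoff (hR : R ≠ 0) (u : 𝓢(E, F)) (ξ : E) :
    𝓕 (resolventCutoff R u) ξ = resolventSymbol R ‖ξ‖ • 𝓕 u ξ := by
  rw [resolventCutoff, SchwartzMap.fourierMultiplierCLM_apply,
    FourierTransform.fourier_fourierInv_eq,
    SchwartzMap.smulLeftCLM_apply_apply (hasTemperateGrowth_resolventSymbol_norm E hR)]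

lemma norm_fourier_resolventCutoff (hR : R ≠ 0) (u : 𝓢(E, F)) (ξ : E) :
    ‖𝓕 (resolventCutoff R u) ξ‖ = resolventSymbol R ‖ξ‖ * ‖𝓕 u ξ‖ := by
  rw [fourier_resolventCutoff hR, norm_smul, norm_of_nonneg resolventSymbol_nonneg]

lemma homSobolevNorm_resolventCutoff_le {s : ℝ} (hR : R ≠ 0) (hs : 0 ≤ s) (u : 𝓢(E, F)) :
    homSobolevNorm s (resolventCutoff R u) ≤ homSobolevNorm s u := by
  refine (homSobolevNorm_le_mul hs zero_le_one fun ξ ↦ ?_).trans_eq (one_mul _)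
  rw [norm_fourier_resolventCutoff hR, one_mul]
  gcongr
  exact mul_le_of_le_one_left (norm_nonneg _) resolventSymbol_le_one

lemma homSobolevNorm_one_resolventCutoff_le (hR : 0 < R) (u : 𝓢(E, F)) :
    homSobolevNorm 1 (resolventCutoff R u) ≤ R * homSobolevNorm 0 u := by
  refine homSobolevNorm_le_mul le_rfl hR.le fun ξ ↦ ?_
  rw [norm_fourier_resolventCutoff hR.ne', rpow_one, rpow_zero, one_mul, ← mul_assoc]
  gcongr
  exact mul_resolventSymbol_le hR

lemma homSobolevNorm_zero_sub_resolventCutoff_le (hR : 0 < R) (u : 𝓢(E, F)) :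
    homSobolevNorm 0 (u - resolventCutoff R u) ≤ R⁻¹ * homSobolevNorm 1 u := by
  refine homSobolevNorm_le_mul zero_le_one (by positivity) fun ξ ↦ ?_
  have hξ : 𝓕 (u - resolventCutoff R u) ξ = (1 - resolventSymbol R ‖ξ‖) • 𝓕 u ξ := by
    rw [fourier_sub_apply, fourier_resolventCutoff hR.ne', sub_smul, one_smul]
  rw [hξ, norm_smul, norm_of_nonneg (sub_nonneg.2 resolventSymbol_le_one), rpow_one,
    rpow_zero, one_mul, ← mul_assoc]
  gcongr
  exact one_sub_resolventSymbol_le hR (norm_nonneg ξ)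

lemma mul_homSobolevNorm_sq_add (hR : 0 < R) (u : 𝓢(E, F)) :
    R * homSobolevNorm 0 (resolventCutoff (2 * R) u - resolventCutoff R u) ^ 2 +
        R⁻¹ * (homSobolevNorm 1 (resolventCutoff (2 * R) u) ^ 2 +
          homSobolevNorm 1 (resolventCutoff R u) ^ 2) =
      ∫ ξ : E, (R * (resolventSymbol (2 * R) ‖ξ‖ - resolventSymbol R ‖ξ‖) ^ 2 +
        R⁻¹ * (‖ξ‖ ^ 2 * (resolventSymbol (2 * R) ‖ξ‖ ^ 2 + resolventSymbol R ‖ξ‖ ^ 2))) *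
        ‖𝓕 u ξ‖ ^ 2 := by
  have hint₀ (w : 𝓢(E, F)) : Integrable fun ξ ↦ ‖w ξ‖ ^ 2 := by
    simpa using integrable_norm_rpow_mul_norm_sq w le_rfl
  have hint₁ (w : 𝓢(E, F)) : Integrable fun ξ ↦ ‖ξ‖ ^ 2 * ‖w ξ‖ ^ 2 := by
    simpa using integrable_norm_rpow_mul_norm_sq w zero_le_two
  rw [homSobolevNorm_zero_sq, homSobolevNorm_one_sq, homSobolevNorm_one_sq,
    ← integral_add (hint₁ _) (hint₁ _), ← integral_const_mul, ← integral_const_mul,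
    ← integral_add ((hint₀ _).const_mul _) (((hint₁ _).fun_add (hint₁ _)).const_mul _)]
  congr! 2 with ξ
  simp only [fourier_sub_apply, fourier_resolventCutoff, hR.ne', mul_eq_zero, two_ne_zero,
    or_self, ← sub_smul, norm_smul, mul_pow, Real.norm_eq_abs, sq_abs, ne_eq, not_false_eq_true]
  ring

lemma mul_add_le_mul_sq_add_inv_mul (hR : 0 < R) (a b c : ℝ) :
    a * (b + c) ≤ R * a ^ 2 + R⁻¹ * (b ^ 2 + c ^ 2) := by
  have hsquares : R * a ^ 2 + R⁻¹ * (b ^ 2 + c ^ 2) - a * (b + c) =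
      R⁻¹ * ((R * a - b) ^ 2 + (R * a - c) ^ 2 + b ^ 2 + c ^ 2) / 2 := by
    field_simp
    ring
  exact sub_nonneg.1 (hsquares ▸ by positivity)

lemma homSobolevNorm_dyadic_le (hR : 0 < R) (u : 𝓢(E, F)) :
    homSobolevNorm 0 (resolventCutoff (2 * R) u - resolventCutoff R u) *
        (homSobolevNorm 1 (resolventCutoff (2 * R) u) + homSobolevNorm 1 (resolventCutoff R u)) ≤
      24 * (saturatedEnergy (2 * R) u - saturatedEnergy R u) := by
  have hint₂ := integrable_saturation_mul_norm_sq (by positivity : 0 < 2 * R) (𝓕 u)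
  have hint := integrable_saturation_mul_norm_sq hR (𝓕 u)
  rw [saturatedEnergy, saturatedEnergy, ← integral_sub hint₂ hint, ← integral_const_mul]
  refine (mul_add_le_mul_sq_add_inv_mul hR _ _ _).trans ?_
  rw [mul_homSobolevNorm_sq_add hR]
  refine integral_mono_of_nonneg (.of_forall fun ξ ↦ by positivity)
    ((hint₂.sub hint).const_mul _) (.of_forall fun ξ ↦ ?_)
  simp only [← sub_mul, ← mul_assoc (24 : ℝ)]
  exact mul_le_mul_of_nonneg_right (resolventSymbol_dyadic_le hR (norm_nonneg ξ)) (sq_nonneg _)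

/-- `Q` is Lipschitz in `L²` with a constant growing linearly in `Ḣ¹`, the way the quadratic map
of a sesquilinear form bounded both on `L² × Ḣ¹` and on `Ḣ¹ × L²` is. -/
def SobolevQuadraticBound {H : Type*} [NormedAddCommGroup H] (C : ℝ) (Q : 𝓢(E, F) → H) : Prop :=
  ∀ u v, ‖Q u - Q v‖ ≤ C * (homSobolevNorm 0 (u - v) * (homSobolevNorm 1 u + homSobolevNorm 1 v))

variable {H : Type*} [NormedAddCommGroup H] {C : ℝ} {Q : 𝓢(E, F) → H}

lemma norm_sub_resolventCutoff_dyadic_le (hC : 0 ≤ C) (hQ : SobolevQuadraticBound C Q)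
    (hR : 0 < R) (u : 𝓢(E, F)) (n : ℕ) :
    ‖Q (resolventCutoff (2 ^ n * R) u) - Q (resolventCutoff R u)‖ ≤
      C * (24 * (saturatedEnergy (2 ^ n * R) u - saturatedEnergy R u)) := by
  induction n with
  | zero => simp
  | succ n ih =>
    have hn : 0 < 2 ^ n * R := by positivity
    have hstep : ‖Q (resolventCutoff (2 ^ (n + 1) * R) u) - Q (resolventCutoff (2 ^ n * R) u)‖ ≤
        C * (24 * (saturatedEnergy (2 ^ (n + 1) * R) u - saturatedEnergy (2 ^ n * R) u)) := by
      rw [pow_succ', mul_assoc]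
      exact (hQ _ _).trans (mul_le_mul_of_nonneg_left (homSobolevNorm_dyadic_le hn u) hC)
    linarith [norm_sub_le_norm_sub_add_norm_sub (Q (resolventCutoff (2 ^ (n + 1) * R) u))
      (Q (resolventCutoff (2 ^ n * R) u)) (Q (resolventCutoff R u))]

lemma tendsto_resolventCutoff_atTop (hC : 0 ≤ C) (hQ : SobolevQuadraticBound C Q)
    (u : 𝓢(E, F)) :
    Tendsto (fun R ↦ Q (resolventCutoff R u)) atTop (𝓝 (Q u)) := by
  rw [tendsto_iff_norm_sub_tendsto_zero]
  have hbound : Tendsto (fun R : ℝ ↦ C * (R⁻¹ * homSobolevNorm 1 u *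
      (homSobolevNorm 1 u + homSobolevNorm 1 u))) atTop (𝓝 0) := by
    simpa using ((tendsto_inv_atTop_zero.mul_const (homSobolevNorm 1 u)).mul_const
      (homSobolevNorm 1 u + homSobolevNorm 1 u)).const_mul C
  refine squeeze_zero' (.of_forall fun _ ↦ norm_nonneg _) ?_ hbound
  filter_upwards [eventually_gt_atTop 0] with R hR
  rw [norm_sub_rev]
  refine (hQ _ _).trans (mul_le_mul_of_nonneg_left ?_ hC)
  have := homSobolevNorm_nonneg 1 u
  gcongr
  · exact add_nonneg (homSobolevNorm_nonneg _ _) (homSobolevNorm_nonneg _ _)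
  · exact homSobolevNorm_zero_sub_resolventCutoff_le hR u
  · exact homSobolevNorm_resolventCutoff_le hR.ne' zero_le_one u

lemma tendsto_resolventCutoff_nhdsGT_zero (hC : 0 ≤ C) (hQ : SobolevQuadraticBound C Q)
    (u : 𝓢(E, F)) :
    Tendsto (fun R ↦ Q (resolventCutoff R u)) (𝓝[>] 0) (𝓝 (Q 0)) := by
  rw [tendsto_iff_norm_sub_tendsto_zero]
  have hbound : Tendsto (fun R : ℝ ↦ C * (homSobolevNorm 0 u * (R * homSobolevNorm 0 u)))
      (𝓝[>] 0) (𝓝 0) :=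
    tendsto_nhdsWithin_of_tendsto_nhds (Continuous.tendsto' (by fun_prop) _ _ (by simp))
  refine squeeze_zero' (.of_forall fun _ ↦ norm_nonneg _) ?_ hbound
  filter_upwards [self_mem_nhdsWithin] with R (hR : 0 < R)
  refine (hQ _ _).trans (mul_le_mul_of_nonneg_left ?_ hC)
  rw [sub_zero, homSobolevNorm_zero_right, add_zero]
  exact mul_le_mul (homSobolevNorm_resolventCutoff_le hR.ne' le_rfl u)
    (homSobolevNorm_one_resolventCutoff_le hR u) (homSobolevNorm_nonneg _ _)
    (homSobolevNorm_nonneg _ _)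

theorem norm_sub_le_homSobolevNorm_half_sq (hC : 0 ≤ C) (hQ : SobolevQuadraticBound C Q)
    (u : 𝓢(E, F)) : ‖Q u - Q 0‖ ≤ C * (24 * homSobolevNorm (1 / 2) u ^ 2) := by
  have hbands {R : ℝ} (hR : 0 < R) (n : ℕ) :
      ‖Q (resolventCutoff (2 ^ n * R) u) - Q (resolventCutoff R u)‖ ≤
        C * (24 * homSobolevNorm (1 / 2) u ^ 2) := by
    refine (norm_sub_resolventCutoff_dyadic_le hC hQ hR u n).trans ?_
    gcongr
    linarith [saturatedEnergy_nonneg hR u,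
      saturatedEnergy_le_homSobolevNorm_sq (by positivity : 0 < 2 ^ n * R) u]
  have hlow {R : ℝ} (hR : 0 < R) :
      ‖Q u - Q (resolventCutoff R u)‖ ≤ C * (24 * homSobolevNorm (1 / 2) u ^ 2) := by
    have hscale : Tendsto (fun n : ℕ ↦ 2 ^ n * R) atTop atTop :=
      (tendsto_pow_atTop_atTop_of_one_lt one_lt_two).atTop_mul_const hR
    exact le_of_tendsto (((tendsto_resolventCutoff_atTop hC hQ u).comp hscale).sub_const _).norm
      (.of_forall (hbands hR))
  exact le_of_tendsto ((tendsto_resolventCutoff_nhdsGT_zero hC hQ u).const_sub _).norm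
    (eventually_nhdsWithin_of_forall fun _ ↦ hlow)

end Interpolation

section Divergence

variable {E G : Type*} [NormedAddCommGroup E] [InnerProductSpace ℝ E]
  [NormedAddCommGroup G] [NormedSpace ℝ G]

/-- The divergence of a vector field, as the trace of its derivative. -/
def divergence (X : E → E) (x : E) : ℝ := LinearMap.trace ℝ E (fderiv ℝ X x)

lemma divergence_eq_sum {ι : Type*} [Fintype ι] (b : OrthonormalBasis ι ℝ E) {X : E → E} {x : E}
    (hX : DifferentiableAt ℝ X x) :
    divergence X x = ∑ i, fderiv ℝ (fun z ↦ inner ℝ (b i) (X z)) x (b i) := by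
  rw [divergence, LinearMap.trace_eq_sum_inner _ b]
  refine Finset.sum_congr rfl fun i _ ↦ ?_
  rw [fderiv_inner_apply ℝ (differentiableAt_const _) hX]
  simp

lemma sum_inner_smul_apply {ι : Type*} [Fintype ι] (b : OrthonormalBasis ι ℝ E) (L : E →L[ℝ] G)
    (x : E) : ∑ i, inner ℝ (b i) x • L (b i) = L x := by
  conv_rhs => rw [← b.sum_repr' x]
  simp

lemma norm_sq_le_sum_norm_sq_apply {ι : Type*} [Fintype ι] (b : OrthonormalBasis ι ℝ E)
    (L : E →L[ℝ] G) : ‖L‖ ^ 2 ≤ ∑ i, ‖L (b i)‖ ^ 2 := by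
  refine (le_sqrt (norm_nonneg L) (by positivity)).1 (L.opNorm_le_bound (sqrt_nonneg _) fun x ↦ ?_)
  calc ‖L x‖ ≤ ∑ i, ‖inner ℝ (b i) x‖ * ‖L (b i)‖ := by
        conv_lhs => rw [← sum_inner_smul_apply b L x]
        exact norm_sum_le_of_le _ fun i _ ↦ norm_smul_le _ _
    _ ≤ √(∑ i, ‖inner ℝ (b i) x‖ ^ 2) * √(∑ i, ‖L (b i)‖ ^ 2) :=
        Real.sum_mul_le_sqrt_mul_sqrt _ _ _
    _ = √(∑ i, ‖L (b i)‖ ^ 2) * ‖x‖ := by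
        rw [b.sum_sq_norm_inner_right, sqrt_sq (norm_nonneg x), mul_comm]

variable [FiniteDimensional ℝ E] [MeasurableSpace E] [BorelSpace E]

theorem integral_fderiv_apply_eq_neg_integral_divergence_smul {X : E → E} {f : E → G} {c c' : ℝ}
    (hX : Differentiable ℝ X) (hXb : ∀ x, ‖X x‖ ≤ c) (hX'b : ∀ x, ‖fderiv ℝ X x‖ ≤ c')
    (hf : Differentiable ℝ f) (hfi : Integrable f) (hf'i : Integrable (fderiv ℝ f)) :
    ∫ x, fderiv ℝ f x (X x) = -∫ x, divergence X x • f x := by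
  set b := stdOrthonormalBasis ℝ E
  have hcoord (i) : Differentiable ℝ fun x ↦ inner ℝ (b i) (X x) :=
    (differentiable_const _).inner ℝ hX
  have hcoord' (i x) : fderiv ℝ (fun z ↦ inner ℝ (b i) (X z)) x (b i) =
      inner ℝ (b i) (fderiv ℝ X x (b i)) := by
    rw [fderiv_inner_apply ℝ (differentiableAt_const _) (hX x)]
    simp
  have hXf' (i) : Integrable fun x ↦ inner ℝ (b i) (X x) • fderiv ℝ f x (b i) :=
    (hf'i.apply_continuousLinearMap (b i)).bdd_smul c (hcoord i).continuous.aestronglyMeasurable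
      (.of_forall fun x ↦ (norm_inner_le_norm _ _).trans (by simpa using hXb x))
  have hXf (i) : Integrable fun x ↦ inner ℝ (b i) (X x) • f x :=
    hfi.bdd_smul c (hcoord i).continuous.aestronglyMeasurable
      (.of_forall fun x ↦ (norm_inner_le_norm _ _).trans (by simpa using hXb x))
  have hX'f (i) : Integrable fun x ↦ fderiv ℝ (fun z ↦ inner ℝ (b i) (X z)) x (b i) • f x :=
    hfi.bdd_smul c' (measurable_fderiv_apply_const ℝ _ _).aestronglyMeasurable
      (.of_forall fun x ↦ (hcoord' i x ▸ norm_inner_le_norm _ _).trans (by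
        simpa using ((fderiv ℝ X x).le_opNorm (b i)).trans (by simpa using hX'b x)))
  calc ∫ x, fderiv ℝ f x (X x)
      = ∑ i, ∫ x, inner ℝ (b i) (X x) • fderiv ℝ f x (b i) := by
        rw [← integral_finsetSum _ fun i _ ↦ hXf' i]
        simp only [sum_inner_smul_apply]
    _ = ∑ i, -∫ x, fderiv ℝ (fun z ↦ inner ℝ (b i) (X z)) x (b i) • f x :=
        Finset.sum_congr rfl fun i _ ↦ integral_smul_fderiv_eq_neg_fderiv_smul_of_integrable
          (hX'f i) (hXf' i) (hXf i) (fun x _ ↦ hcoord i x) fun x _ ↦ hf x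
    _ = -∫ x, divergence X x • f x := by
        rw [Finset.sum_neg_distrib, ← integral_finsetSum _ fun i _ ↦ hX'f i]
        simp only [divergence_eq_sum b (hX _), Finset.sum_smul]

end Divergence

section RadialField

lemma rpow_neg_sub_one_mul_sq_le {δ : ℝ} (hδ : 0 < δ) (a r : ℝ) :
    (δ + r ^ 2) ^ (-a - 1) * r ^ 2 ≤ (δ + r ^ 2) ^ (-a) := by
  have hpos : 0 < δ + r ^ 2 := by positivity
  rw [rpow_sub_one hpos.ne', div_mul_eq_mul_div, div_le_iff₀ hpos]
  gcongr
  linarith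

lemma rpow_add_sq_le {a δ : ℝ} (ha : a ≤ 0) (hδ : 0 < δ) (r : ℝ) : (δ + r ^ 2) ^ a ≤ δ ^ a :=
  rpow_le_rpow_of_nonpos hδ (le_add_of_nonneg_right (sq_nonneg r)) ha

lemma continuous_rpow_add_norm_sub_sq {E : Type*} [NormedAddCommGroup E] {δ : ℝ} (a : ℝ)
    (hδ : 0 < δ) (y : E) : Continuous fun x : E ↦ (δ + ‖x - y‖ ^ 2) ^ a :=
  Continuous.rpow_const (by fun_prop) fun x ↦ .inl (by positivity)

variable {E : Type*} [NormedAddCommGroup E] [InnerProductSpace ℝ E] {a δ : ℝ}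

/-- The radial field `(δ + |x - y|²)^{-a} (x - y)` centred at `y`; for `a = 1/2` it regularises the
Morawetz field `(x - y) / |x - y|`, and for `a = 1` the field `(x - y) / |x - y|²` that proves
Hardy's inequality. -/
def radialField (a δ : ℝ) (y x : E) : E := (δ + ‖x - y‖ ^ 2) ^ (-a) • (x - y)

lemma radialField_half_zero (y x : E) : radialField (1 / 2) 0 y x = ‖x - y‖⁻¹ • (x - y) := by
  rw [radialField, zero_add, ← rpow_natCast_mul (norm_nonneg _)]
  norm_num [rpow_neg_one]

lemma tendsto_radialField (a : ℝ) (y x : E) :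
    Tendsto (fun δ ↦ radialField a δ y x) (𝓝[>] 0) (𝓝 (radialField a 0 y x)) := by
  obtain rfl | hxy := eq_or_ne x y
  · simp [radialField]
  have hpos : 0 < ‖x - y‖ := norm_pos_iff.2 (sub_ne_zero.2 hxy)
  have hcont : ContinuousAt (fun δ : ℝ ↦ (δ + ‖x - y‖ ^ 2) ^ (-a)) 0 :=
    ContinuousAt.rpow_const (by fun_prop) (.inl (by positivity))
  exact (hcont.smul continuousAt_const).tendsto.mono_left nhdsWithin_le_nhds

lemma hasFDerivAt_radialField (a : ℝ) (hδ : 0 < δ) (y x : E) :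
    HasFDerivAt (radialField a δ y)
      ((δ + ‖x - y‖ ^ 2) ^ (-a) • ContinuousLinearMap.id ℝ E +
        ((-2 * a * (δ + ‖x - y‖ ^ 2) ^ (-a - 1)) • innerSL ℝ (x - y)).smulRight (x - y)) x := by
  have hsub : HasFDerivAt (fun z ↦ z - y) (ContinuousLinearMap.id ℝ E) x :=
    (hasFDerivAt_id x).sub_const y
  have hq : HasFDerivAt (fun z ↦ δ + ‖z - y‖ ^ 2) (2 • innerSL ℝ (x - y)) x := by
    simpa using hsub.norm_sq.const_add δ
  have hpos : 0 < δ + ‖x - y‖ ^ 2 := by positivity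
  refine ((hq.rpow_const (p := -a) (.inl hpos.ne')).smul hsub).congr_fderiv ?_
  ext v
  simp only [neg_mul, add_apply, smul_apply, ContinuousLinearMap.id_apply,
    ContinuousLinearMap.smulRight_apply, nsmul_eq_mul, Nat.cast_ofNat, smul_eq_mul, neg_smul,
    neg_apply]
  module

lemma differentiable_radialField (a : ℝ) (hδ : 0 < δ) (y : E) :
    Differentiable ℝ (radialField a δ y) :=
  fun x ↦ (hasFDerivAt_radialField a hδ y x).differentiableAt

lemma norm_radialField_le (a : ℝ) (hδ : 0 ≤ δ) (y x : E) :
    ‖radialField a δ y x‖ ≤ (δ + ‖x - y‖ ^ 2) ^ (1 / 2 - a) := by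
  obtain rfl | hxy := eq_or_ne x y
  · simpa [radialField] using rpow_nonneg hδ _
  have hpos : 0 < δ + ‖x - y‖ ^ 2 :=
    add_pos_of_nonneg_of_pos hδ (pow_pos (norm_pos_iff.2 (sub_ne_zero.2 hxy)) 2)
  have hle : ‖x - y‖ ≤ (δ + ‖x - y‖ ^ 2) ^ (1 / 2 : ℝ) :=
    sqrt_eq_rpow (δ + ‖x - y‖ ^ 2) ▸ le_sqrt_of_sq_le (by linarith)
  calc ‖radialField a δ y x‖ = (δ + ‖x - y‖ ^ 2) ^ (-a) * ‖x - y‖ := by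
        rw [radialField, norm_smul, norm_of_nonneg (by positivity)]
    _ ≤ (δ + ‖x - y‖ ^ 2) ^ (-a) * (δ + ‖x - y‖ ^ 2) ^ (1 / 2 : ℝ) := by gcongr
    _ = (δ + ‖x - y‖ ^ 2) ^ (1 / 2 - a) := by rw [← rpow_add hpos, neg_add_eq_sub]

lemma norm_radialField_half_le_one (hδ : 0 ≤ δ) (y x : E) : ‖radialField (1 / 2) δ y x‖ ≤ 1 :=
  (norm_radialField_le _ hδ y x).trans_eq (by norm_num)

lemma norm_fderiv_radialField_le (ha : 0 ≤ a) (hδ : 0 < δ) (y x : E) :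
    ‖fderiv ℝ (radialField a δ y) x‖ ≤ (1 + 2 * a) * (δ + ‖x - y‖ ^ 2) ^ (-a) := by
  rw [(hasFDerivAt_radialField a hδ y x).fderiv]
  calc _ ≤ (δ + ‖x - y‖ ^ 2) ^ (-a) * 1 +
        2 * a * (δ + ‖x - y‖ ^ 2) ^ (-a - 1) * ‖x - y‖ * ‖x - y‖ := by
        refine (norm_add_le _ _).trans (add_le_add ?_ ?_)
        · rw [norm_smul, norm_of_nonneg (by positivity)]
          gcongr
          exact ContinuousLinearMap.norm_id_le
        · rw [ContinuousLinearMap.norm_smulRight_apply, norm_smul, innerSL_apply_norm,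
            neg_mul, neg_mul, norm_neg, norm_of_nonneg (by positivity)]
    _ = (δ + ‖x - y‖ ^ 2) ^ (-a) + 2 * a * ((δ + ‖x - y‖ ^ 2) ^ (-a - 1) * ‖x - y‖ ^ 2) := by ring
    _ ≤ (δ + ‖x - y‖ ^ 2) ^ (-a) + 2 * a * (δ + ‖x - y‖ ^ 2) ^ (-a) := by
        gcongr
        exact rpow_neg_sub_one_mul_sq_le hδ a _
    _ = (1 + 2 * a) * (δ + ‖x - y‖ ^ 2) ^ (-a) := by ring

variable [FiniteDimensional ℝ E]

lemma divergence_radialField (a : ℝ) (hδ : 0 < δ) (y x : E) :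
    divergence (radialField a δ y) x = Module.finrank ℝ E * (δ + ‖x - y‖ ^ 2) ^ (-a) -
      2 * a * ((δ + ‖x - y‖ ^ 2) ^ (-a - 1) * ‖x - y‖ ^ 2) := by
  have hsmulRight (L : E →L[ℝ] ℝ) (v : E) :
      ((L.smulRight v : E →L[ℝ] E) : E →ₗ[ℝ] E) = (L : E →ₗ[ℝ] ℝ).smulRight v := rfl
  rw [divergence, (hasFDerivAt_radialField a hδ y x).fderiv, ContinuousLinearMap.toLinearMap_add,
    ContinuousLinearMap.toLinearMap_smul, ContinuousLinearMap.coe_id, hsmulRight, map_add, map_smul,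
    LinearMap.trace_id, LinearMap.trace_smulRight]
  simp only [ContinuousLinearMap.coe_coe, smul_apply, innerSL_apply_apply,
    real_inner_self_eq_norm_sq, smul_eq_mul]
  ring

lemma le_divergence_radialField (ha : 0 ≤ a) (hδ : 0 < δ) (y x : E) :
    (Module.finrank ℝ E - 2 * a) * (δ + ‖x - y‖ ^ 2) ^ (-a) ≤ divergence (radialField a δ y) x := by
  rw [divergence_radialField a hδ]
  linarith [mul_le_mul_of_nonneg_left (rpow_neg_sub_one_mul_sq_le hδ a ‖x - y‖)
    (by positivity : 0 ≤ 2 * a)]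

lemma abs_divergence_radialField_le (ha : 0 ≤ a) (had : 2 * a ≤ Module.finrank ℝ E) (hδ : 0 < δ)
    (y x : E) : |divergence (radialField a δ y) x| ≤
      Module.finrank ℝ E * (δ + ‖x - y‖ ^ 2) ^ (-a) := by
  have hnonneg : 0 ≤ divergence (radialField a δ y) x :=
    (mul_nonneg (sub_nonneg.2 had) (by positivity)).trans (le_divergence_radialField ha hδ y x)
  rw [abs_of_nonneg hnonneg, divergence_radialField a hδ]
  exact sub_le_self _ (by positivity)

lemma continuous_divergence_radialField (a : ℝ) (hδ : 0 < δ) (y : E) :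
    Continuous (divergence (radialField a δ y)) := by
  rw [funext (divergence_radialField a hδ y)]
  have := continuous_rpow_add_norm_sub_sq (-a) hδ y
  have := continuous_rpow_add_norm_sub_sq (-a - 1) hδ y
  fun_prop

lemma measurable_radialField [MeasurableSpace E] [BorelSpace E] (a δ : ℝ) (y : E) :
    Measurable (radialField a δ y) := by
  unfold radialField
  fun_prop

end RadialField

section AdvectionForm

variable {E F : Type*} [NormedAddCommGroup E] [InnerProductSpace ℝ E] [FiniteDimensional ℝ E]
  [MeasurableSpace E] [BorelSpace E] [NormedAddCommGroup F] [InnerProductSpace ℂ F]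

lemma memLp_fderiv (u : 𝓢(E, F)) (p : ℝ≥0∞) : MemLp (fderiv ℝ u) p :=
  (SchwartzMap.fderivCLM ℝ E F u).memLp p volume

lemma integrable_norm_mul_norm (u v : 𝓢(E, F)) : Integrable fun x ↦ ‖u x‖ * ‖v x‖ :=
  (u.memLp 2).norm.integrable_mul (v.memLp 2).norm

lemma integrable_norm_mul_norm_fderiv (u v : 𝓢(E, F)) :
    Integrable fun x ↦ ‖u x‖ * ‖fderiv ℝ v x‖ :=
  (u.memLp 2).norm.integrable_mul (memLp_fderiv v 2).norm

lemma integrable_inner_schwartz (u v : 𝓢(E, F)) : Integrable fun x ↦ inner ℂ (u x) (v x) :=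
  (integrable_norm_mul_norm u v).mono' (u.continuous.inner v.continuous).aestronglyMeasurable
    (.of_forall fun _ ↦ norm_inner_le_norm _ _)

lemma integrable_fderiv_inner_schwartz (u v : 𝓢(E, F)) :
    Integrable (fderiv ℝ fun x ↦ inner ℂ (u x) (v x)) := by
  have hsmooth : ContDiff ℝ 1 fun x ↦ inner ℂ (u x) (v x) := (u.smooth 1).inner ℂ (v.smooth 1)
  refine ((integrable_norm_mul_norm_fderiv u v).add (integrable_norm_mul_norm_fderiv v u)).mono'
    (hsmooth.continuous_fderiv one_ne_zero).aestronglyMeasurable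
    (.of_forall fun x ↦ ContinuousLinearMap.opNorm_le_bound _ (by dsimp; positivity) fun z ↦ ?_)
  rw [fderiv_inner_apply ℂ u.differentiableAt v.differentiableAt]
  calc ‖inner ℂ (u x) (fderiv ℝ v x z) + inner ℂ (fderiv ℝ u x z) (v x)‖
      ≤ ‖u x‖ * (‖fderiv ℝ v x‖ * ‖z‖) + ‖fderiv ℝ u x‖ * ‖z‖ * ‖v x‖ := by
        refine norm_add_le_of_le ((norm_inner_le_norm _ _).trans ?_)
          ((norm_inner_le_norm _ _).trans ?_) <;> gcongr <;> exact ContinuousLinearMap.le_opNorm _ _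
    _ = (‖u x‖ * ‖fderiv ℝ v x‖ + ‖v x‖ * ‖fderiv ℝ u x‖) * ‖z‖ := by ring

/-- The sesquilinear form `⟨u, (X · ∇) v⟩_{L²}` of a vector field `X`. The Morawetz action centred
at `y` is the imaginary part of its diagonal for `X x = (x - y) / |x - y|`. -/
def advectionForm (X : E → E) (u v : 𝓢(E, F)) : ℂ := ∫ x, inner ℂ (u x) (fderiv ℝ v x (X x))

variable {X : E → E} {c c' : ℝ}

lemma integrable_advection (hX : AEStronglyMeasurable X) (hXb : ∀ x, ‖X x‖ ≤ c) (u v : 𝓢(E, F)) :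
    Integrable fun x ↦ inner ℂ (u x) (fderiv ℝ v x (X x)) := by
  refine ((integrable_norm_mul_norm_fderiv u v).mul_const c).mono'
    (u.continuous.aestronglyMeasurable.inner
      ((ContinuousLinearMap.id ℝ (E →L[ℝ] F)).aestronglyMeasurable_comp₂
        (memLp_fderiv v 2).1 hX)) (.of_forall fun x ↦ ?_)
  calc ‖inner ℂ (u x) (fderiv ℝ v x (X x))‖ ≤ ‖u x‖ * (‖fderiv ℝ v x‖ * ‖X x‖) :=
        (norm_inner_le_norm _ _).trans (by gcongr; exact ContinuousLinearMap.le_opNorm _ _)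
    _ ≤ ‖u x‖ * ‖fderiv ℝ v x‖ * c := by rw [← mul_assoc]; gcongr; exact hXb x

lemma norm_advectionForm_le {w : E → ℝ} (hw : ∀ x, ‖X x‖ ≤ w x) {u : 𝓢(E, F)}
    (hwu : MemLp (fun x ↦ w x • u x) 2) (v : 𝓢(E, F)) :
    ‖advectionForm X u v‖ ≤
      lpNorm (fun x ↦ w x • u x) 2 volume * lpNorm (fderiv ℝ v) 2 volume := by
  have hv := memLp_fderiv v 2
  refine (norm_integral_le_of_norm_le (hwu.norm.integrable_mul hv.norm)
    (.of_forall fun x ↦ ?_)).trans (integral_norm_mul_norm_le_lpNorm_two hwu hv)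
  have hwx := (norm_nonneg _).trans (hw x)
  calc ‖inner ℂ (u x) (fderiv ℝ v x (X x))‖ ≤ ‖u x‖ * (‖fderiv ℝ v x‖ * ‖X x‖) :=
        (norm_inner_le_norm _ _).trans (by gcongr; exact ContinuousLinearMap.le_opNorm _ _)
    _ ≤ ‖u x‖ * (‖fderiv ℝ v x‖ * w x) := by gcongr; exact hw x
    _ = ‖w x • u x‖ * ‖fderiv ℝ v x‖ := by rw [norm_smul, norm_of_nonneg hwx]; ring

lemma advectionForm_self_sub_self (hX : AEStronglyMeasurable X) (hXb : ∀ x, ‖X x‖ ≤ c)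
    (u v : 𝓢(E, F)) : advectionForm X u u - advectionForm X v v =
      advectionForm X (u - v) u + advectionForm X v (u - v) := by
  have hint := integrable_advection hX hXb (F := F)
  simp only [advectionForm]
  rw [← integral_sub (hint _ _) (hint _ _), ← integral_add (hint _ _) (hint _ _)]
  congr with x
  have hsub : fderiv ℝ (u - v) x = fderiv ℝ u x - fderiv ℝ v x :=
    fderiv_sub u.differentiableAt v.differentiableAt
  rw [hsub]
  simp

lemma advectionForm_add_conj_swap (hX : Differentiable ℝ X) (hXb : ∀ x, ‖X x‖ ≤ c)
    (hX'b : ∀ x, ‖fderiv ℝ X x‖ ≤ c') (u v : 𝓢(E, F)) :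
    advectionForm X u v + conj (advectionForm X v u) =
      -∫ x, divergence X x • inner ℂ (u x) (v x) := by
  have hint := integrable_advection hX.continuous.aestronglyMeasurable hXb (F := F)
  have hconj : conj (advectionForm X v u) = ∫ x, inner ℂ (fderiv ℝ u x (X x)) (v x) := by
    simp only [advectionForm, ← integral_conj, inner_conj_symm]
  rw [← integral_fderiv_apply_eq_neg_integral_divergence_smul hX hXb hX'b
    (u.differentiable.inner ℂ v.differentiable) (integrable_inner_schwartz u v)
    (integrable_fderiv_inner_schwartz u v), hconj, advectionForm, ← integral_add (hint u v)]
  · simp only [fderiv_inner_apply ℂ u.differentiableAt v.differentiableAt]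
  · simpa using Complex.conjCLE.toContinuousLinearMap.integrable_comp (hint v u)

end AdvectionForm

section Hardy

variable {E F : Type*} [NormedAddCommGroup E] [InnerProductSpace ℝ E] [FiniteDimensional ℝ E]
  [MeasurableSpace E] [BorelSpace E] [NormedAddCommGroup F] [InnerProductSpace ℂ F] {a δ : ℝ}

lemma memLp_rpow_smul (ha : a ≤ 0) (hδ : 0 < δ) (y : E) (u : 𝓢(E, F)) :
    MemLp (fun x ↦ (δ + ‖x - y‖ ^ 2) ^ a • u x) 2 := by
  refine ((u.memLp 2).const_smul (δ ^ a)).mono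
    ((continuous_rpow_add_norm_sub_sq a hδ y).smul u.continuous).aestronglyMeasurable
    (.of_forall fun x ↦ ?_)
  change ‖(δ + ‖x - y‖ ^ 2) ^ a • u x‖ ≤ ‖δ ^ a • u x‖
  rw [norm_smul, norm_smul, norm_of_nonneg (by positivity), norm_of_nonneg (by positivity)]
  exact mul_le_mul_of_nonneg_right (rpow_add_sq_le ha hδ _) (norm_nonneg _)

lemma advectionForm_radialField_add_conj_swap (ha : 1 / 2 ≤ a) (hδ : 0 < δ) (y : E)
    (u v : 𝓢(E, F)) :
    advectionForm (radialField a δ y) u v + conj (advectionForm (radialField a δ y) v u) =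
      -∫ x, divergence (radialField a δ y) x • inner ℂ (u x) (v x) :=
  advectionForm_add_conj_swap (differentiable_radialField a hδ y)
    (fun x ↦ (norm_radialField_le a hδ.le y x).trans (rpow_add_sq_le (by linarith) hδ _))
    (fun x ↦ (norm_fderiv_radialField_le (by linarith) hδ y x).trans
      (mul_le_mul_of_nonneg_left (rpow_add_sq_le (by linarith) hδ _) (by linarith))) u v

lemma integrable_divergence_radialField_smul_inner (ha : 0 ≤ a)
    (had : 2 * a ≤ Module.finrank ℝ E) (hδ : 0 < δ) (y : E) (u v : 𝓢(E, F)) :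
    Integrable fun x ↦ divergence (radialField a δ y) x • inner ℂ (u x) (v x) :=
  (integrable_inner_schwartz u v).bdd_smul (Module.finrank ℝ E * δ ^ (-a))
    (continuous_divergence_radialField a hδ y).aestronglyMeasurable
    (.of_forall fun x ↦ (abs_divergence_radialField_le ha had hδ y x).trans
      (mul_le_mul_of_nonneg_left (rpow_add_sq_le (by linarith) hδ _) (Nat.cast_nonneg _)))

lemma sub_two_mul_integral_rpow_mul_norm_sq_le (ha : 1 / 2 ≤ a)
    (had : 2 * a ≤ Module.finrank ℝ E) (hδ : 0 < δ) (y : E) (u : 𝓢(E, F)) :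
    (Module.finrank ℝ E - 2 * a) * ∫ x, (δ + ‖x - y‖ ^ 2) ^ (-a) * ‖u x‖ ^ 2 ≤
      2 * ‖advectionForm (radialField a δ y) u u‖ := by
  have hself (x) : divergence (radialField a δ y) x • inner ℂ (u x) (u x) =
      ((divergence (radialField a δ y) x * ‖u x‖ ^ 2 : ℝ) : ℂ) := by
    simp
  have hint : Integrable fun x ↦ divergence (radialField a δ y) x * ‖u x‖ ^ 2 := by
    have := integrable_divergence_radialField_smul_inner (by linarith) had hδ y u u
    simp only [hself] at this
    exact this.re
  calc (Module.finrank ℝ E - 2 * a) * ∫ x, (δ + ‖x - y‖ ^ 2) ^ (-a) * ‖u x‖ ^ 2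
      ≤ ∫ x, divergence (radialField a δ y) x * ‖u x‖ ^ 2 := by
        rw [← integral_const_mul]
        refine integral_mono_of_nonneg (.of_forall fun x ↦ mul_nonneg (sub_nonneg.2 had)
          (by positivity)) hint (.of_forall fun x ↦ ?_)
        simp only [← mul_assoc]
        gcongr
        exact le_divergence_radialField (by linarith) hδ y x
    _ ≤ ‖∫ x, divergence (radialField a δ y) x • inner ℂ (u x) (u x)‖ := by
        simp only [hself]
        rw [integral_complex_ofReal, norm_real]
        exact le_abs_self _
    _ = ‖advectionForm (radialField a δ y) u u +
          conj (advectionForm (radialField a δ y) u u)‖ := by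
        rw [advectionForm_radialField_add_conj_swap ha hδ, norm_neg]
    _ ≤ 2 * ‖advectionForm (radialField a δ y) u u‖ :=
        (norm_add_le _ _).trans_eq (by rw [RCLike.norm_conj, two_mul])

theorem hardy_inequality (hd : 2 ≤ Module.finrank ℝ E) (hδ : 0 < δ) (y : E) (u : 𝓢(E, F)) :
    (Module.finrank ℝ E - 2) *
        lpNorm (fun x ↦ (δ + ‖x - y‖ ^ 2) ^ (-(1 / 2) : ℝ) • u x) 2 volume ≤
      2 * lpNorm (fderiv ℝ u) 2 volume := by
  set w : E → F := fun x ↦ (δ + ‖x - y‖ ^ 2) ^ (-(1 / 2) : ℝ) • u x with hw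
  have hwL2 : MemLp w 2 := memLp_rpow_smul (by norm_num) hδ y u
  have hwsq : lpNorm w 2 volume ^ 2 = ∫ x, (δ + ‖x - y‖ ^ 2) ^ (-1 : ℝ) * ‖u x‖ ^ 2 := by
    rw [lpNorm_two_sq hwL2.1]
    congr with x
    rw [hw, norm_smul, mul_pow, norm_of_nonneg (by positivity), ← rpow_mul_natCast (by positivity)]
    norm_num
  have hform : ‖advectionForm (radialField 1 δ y) u u‖ ≤
      lpNorm w 2 volume * lpNorm (fderiv ℝ u) 2 volume :=
    norm_advectionForm_le (fun x ↦ (norm_radialField_le 1 hδ.le y x).trans_eq (by norm_num)) hwL2 u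
  have hsq := sub_two_mul_integral_rpow_mul_norm_sq_le (a := 1) (by norm_num)
    (by exact_mod_cast hd) hδ y u
  rw [← hwsq] at hsq
  obtain hzero | hpos := lpNorm_nonneg.eq_or_lt (a := (0 : ℝ)) (b := lpNorm w 2 volume)
  · rw [← hzero, mul_zero]
    exact mul_nonneg zero_le_two lpNorm_nonneg
  · refine le_of_mul_le_mul_left ?_ hpos
    linarith

end Hardy

section MorawetzForm

variable {E F : Type*} [NormedAddCommGroup E] [InnerProductSpace ℝ E] [FiniteDimensional ℝ E]
  [MeasurableSpace E] [BorelSpace E] [NormedAddCommGroup F] [InnerProductSpace ℂ F] {δ : ℝ}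

lemma norm_advectionForm_radialField_half_le (hδ : 0 < δ) (y : E) (u v : 𝓢(E, F)) :
    ‖advectionForm (radialField (1 / 2) δ y) u v‖ ≤
      lpNorm u 2 volume * lpNorm (fderiv ℝ v) 2 volume := by
  simpa using norm_advectionForm_le (w := 1) (norm_radialField_half_le_one hδ.le y)
    (by simpa using u.memLp 2) v

lemma norm_integral_divergence_radialField_half_le (hd : 1 ≤ Module.finrank ℝ E) (hδ : 0 < δ)
    (y : E) (u v : 𝓢(E, F)) :
    ‖∫ x, divergence (radialField (1 / 2) δ y) x • inner ℂ (u x) (v x)‖ ≤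
      Module.finrank ℝ E *
        (lpNorm (fun x ↦ (δ + ‖x - y‖ ^ 2) ^ (-(1 / 2) : ℝ) • u x) 2 volume *
          lpNorm v 2 volume) := by
  have hwu : MemLp (fun x ↦ (δ + ‖x - y‖ ^ 2) ^ (-(1 / 2) : ℝ) • u x) 2 :=
    memLp_rpow_smul (by norm_num) hδ y u
  refine (norm_integral_le_of_norm_le ((hwu.norm.integrable_mul (v.memLp 2).norm).const_mul
    (Module.finrank ℝ E : ℝ)) (.of_forall fun x ↦ ?_)).trans ?_
  · calc ‖divergence (radialField (1 / 2) δ y) x • inner ℂ (u x) (v x)‖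
        ≤ Module.finrank ℝ E * (δ + ‖x - y‖ ^ 2) ^ (-(1 / 2) : ℝ) * (‖u x‖ * ‖v x‖) := by
          rw [norm_smul]
          gcongr
          · exact abs_divergence_radialField_le (by norm_num) (by simpa using hd) hδ y x
          · exact norm_inner_le_norm _ _
      _ = Module.finrank ℝ E * (‖(δ + ‖x - y‖ ^ 2) ^ (-(1 / 2) : ℝ) • u x‖ * ‖v x‖) := by
          rw [norm_smul, norm_of_nonneg (by positivity)]
          ring
  · rw [integral_const_mul]
    gcongr
    exact integral_norm_mul_norm_le_lpNorm_two hwu (v.memLp 2)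

lemma norm_advectionForm_radialField_half_le_swap (hd : 3 ≤ Module.finrank ℝ E) (hδ : 0 < δ)
    (y : E) (u v : 𝓢(E, F)) :
    ‖advectionForm (radialField (1 / 2) δ y) u v‖ ≤
      7 * (lpNorm (fderiv ℝ u) 2 volume * lpNorm v 2 volume) := by
  set B := advectionForm (F := F) (radialField (1 / 2) δ y)
  set w : E → F := fun x ↦ (δ + ‖x - y‖ ^ 2) ^ (-(1 / 2) : ℝ) • u x
  have hd' : (3 : ℝ) ≤ Module.finrank ℝ E := by exact_mod_cast hd
  have hhardy : Module.finrank ℝ E * lpNorm w 2 volume ≤ 6 * lpNorm (fderiv ℝ u) 2 volume := by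
    have := hardy_inequality (by omega) hδ y u
    nlinarith [lpNorm_nonneg (f := w) (p := 2) (μ := volume)]
  have hv : 0 ≤ lpNorm v 2 volume := lpNorm_nonneg
  calc ‖B u v‖
      = ‖-(∫ x, divergence (radialField (1 / 2) δ y) x • inner ℂ (u x) (v x)) - conj (B v u)‖ := by
        rw [← advectionForm_radialField_add_conj_swap le_rfl hδ, add_sub_cancel_right]
    _ ≤ Module.finrank ℝ E * (lpNorm w 2 volume * lpNorm v 2 volume) +
          lpNorm v 2 volume * lpNorm (fderiv ℝ u) 2 volume := by
        refine (norm_sub_le _ _).trans (add_le_add ?_ ?_)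
        · rw [norm_neg]
          exact norm_integral_divergence_radialField_half_le (by omega) hδ y u v
        · rw [RCLike.norm_conj]
          exact norm_advectionForm_radialField_half_le hδ y v u
    _ ≤ 7 * (lpNorm (fderiv ℝ u) 2 volume * lpNorm v 2 volume) := by
        linarith [mul_le_mul_of_nonneg_right hhardy hv]

end MorawetzForm

section Plancherel

variable {E F : Type*} [NormedAddCommGroup E] [InnerProductSpace ℝ E] [FiniteDimensional ℝ E]
  [MeasurableSpace E] [BorelSpace E] [NormedAddCommGroup F] [InnerProductSpace ℂ F]

lemma norm_fourier_lineDeriv (u : 𝓢(E, F)) (m ξ : E) :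
    ‖𝓕 (LineDeriv.lineDerivOp m u) ξ‖ = 2 * π * (‖inner ℝ ξ m‖ * ‖𝓕 u ξ‖) := by
  rw [SchwartzMap.fourier_lineDerivOp_eq, smul_apply,
    SchwartzMap.smulLeftCLM_apply_apply (by fun_prop)]
  simp [norm_smul, abs_of_pos pi_pos]

variable [CompleteSpace F]

lemma lpNorm_eq_homSobolevNorm_zero (u : 𝓢(E, F)) : lpNorm u 2 volume = homSobolevNorm 0 u := by
  rw [lpNorm_two_eq_sqrt u.continuous.aestronglyMeasurable, ← SchwartzMap.integral_norm_sq_fourier]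
  simp [homSobolevNorm]

lemma lpNorm_fderiv_le (u : 𝓢(E, F)) :
    lpNorm (fderiv ℝ u) 2 volume ≤ 2 * π * homSobolevNorm 1 u := by
  set b := stdOrthonormalBasis ℝ E
  have hint (w : 𝓢(E, F)) : Integrable fun x ↦ ‖w x‖ ^ 2 := by
    simpa using integrable_norm_rpow_mul_norm_sq w le_rfl
  refine le_of_sq_le_sq ?_ (by have := homSobolevNorm_nonneg 1 u; positivity)
  calc lpNorm (fderiv ℝ u) 2 volume ^ 2
      = ∫ x, ‖fderiv ℝ u x‖ ^ 2 := lpNorm_two_sq (memLp_fderiv u 2).1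
    _ ≤ ∫ x, ∑ i, ‖LineDeriv.lineDerivOp (b i) u x‖ ^ 2 :=
        integral_mono_of_nonneg (.of_forall fun x ↦ by positivity)
          (integrable_finsetSum _ fun i _ ↦ hint _)
          (.of_forall fun x ↦ norm_sq_le_sum_norm_sq_apply b (fderiv ℝ u x))
    _ = ∫ ξ, ∑ i, ‖𝓕 (LineDeriv.lineDerivOp (b i) u) ξ‖ ^ 2 := by
        rw [integral_finsetSum _ fun i _ ↦ hint _, integral_finsetSum _ fun i _ ↦ hint _]
        simp only [SchwartzMap.integral_norm_sq_fourier]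
    _ = (2 * π * homSobolevNorm 1 u) ^ 2 := by
        rw [mul_pow, homSobolevNorm_one_sq, ← integral_const_mul]
        congr with ξ
        simp only [norm_fourier_lineDeriv, mul_pow, ← Finset.mul_sum, ← Finset.sum_mul,
          b.sum_sq_norm_inner_left]

end Plancherel

section Morawetz

variable {E F : Type*} [NormedAddCommGroup E] [InnerProductSpace ℝ E] [FiniteDimensional ℝ E]
  [MeasurableSpace E] [BorelSpace E] [NormedAddCommGroup F] [InnerProductSpace ℂ F]

lemma tendsto_advectionForm_radialField_half (y : E) (u v : 𝓢(E, F)) :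
    Tendsto (fun δ ↦ advectionForm (radialField (1 / 2) δ y) u v) (𝓝[>] 0)
      (𝓝 (advectionForm (radialField (1 / 2) 0 y) u v)) := by
  refine tendsto_integral_filter_of_dominated_convergence (fun x ↦ ‖u x‖ * ‖fderiv ℝ v x‖) ?_ ?_
    (integrable_norm_mul_norm_fderiv u v) (.of_forall fun x ↦ ?_)
  · filter_upwards [self_mem_nhdsWithin] with δ (hδ : 0 < δ)
    exact (integrable_advection (measurable_radialField _ δ y).aestronglyMeasurable
      (norm_radialField_half_le_one hδ.le y) u v).1
  · filter_upwards [self_mem_nhdsWithin] with δ (hδ : 0 < δ)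
    refine .of_forall fun x ↦ (norm_inner_le_norm _ _).trans ?_
    gcongr
    exact ContinuousLinearMap.le_of_opNorm_le_of_le _ le_rfl
      (norm_radialField_half_le_one hδ.le y x) |>.trans_eq (mul_one _)
  · exact tendsto_const_nhds.inner
      (((fderiv ℝ v x).continuous.tendsto _).comp (tendsto_radialField _ y x))

variable [CompleteSpace F]

lemma sobolevQuadraticBound_advectionForm (hd : 3 ≤ Module.finrank ℝ E) {δ : ℝ} (hδ : 0 < δ)
    (y : E) : SobolevQuadraticBound (14 * π)
      fun u : 𝓢(E, F) ↦ advectionForm (radialField (1 / 2) δ y) u u := by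
  intro u v
  have hle := norm_advectionForm_radialField_half_le hδ y (u - v) u
  have hswap := norm_advectionForm_radialField_half_le_swap hd hδ y v (u - v)
  rw [lpNorm_eq_homSobolevNorm_zero] at hle hswap
  rw [advectionForm_self_sub_self (measurable_radialField _ δ y).aestronglyMeasurable
    (norm_radialField_half_le_one hδ.le y)]
  have hzero := homSobolevNorm_nonneg 0 (u - v)
  calc _ ≤ homSobolevNorm 0 (u - v) * (2 * π * homSobolevNorm 1 u) +
        7 * (2 * π * homSobolevNorm 1 v * homSobolevNorm 0 (u - v)) := by
        refine norm_add_le_of_le (hle.trans ?_) (hswap.trans ?_) <;> gcongr <;>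
          exact lpNorm_fderiv_le _
    _ ≤ 14 * π * (homSobolevNorm 0 (u - v) * (homSobolevNorm 1 u + homSobolevNorm 1 v)) := by
        have := mul_nonneg pi_pos.le (mul_nonneg hzero (homSobolevNorm_nonneg 1 u))
        linarith

theorem norm_advectionForm_radialField_half_le_homSobolevNorm_sq (hd : 3 ≤ Module.finrank ℝ E)
    {δ : ℝ} (hδ : 0 < δ) (y : E) (u : 𝓢(E, F)) :
    ‖advectionForm (radialField (1 / 2) δ y) u u‖ ≤ 336 * π * homSobolevNorm (1 / 2) u ^ 2 := by
  have hzero : advectionForm (radialField (1 / 2) δ y) (0 : 𝓢(E, F)) 0 = 0 := by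
    simp [advectionForm]
  have := norm_sub_le_homSobolevNorm_half_sq (by positivity)
    (sobolevQuadraticBound_advectionForm hd hδ y) u
  rw [hzero, sub_zero] at this
  linarith

theorem morawetz_action_Hhalf_bound_general (hd : 3 ≤ Module.finrank ℝ E) (g : 𝓢(E, F)) (y : E) :
    ‖∫ x, inner ℂ (g x) (fderiv ℝ g x (‖x - y‖⁻¹ • (x - y)))‖ ≤
      336 * π * homSobolevNorm (1 / 2) g ^ 2 := by
  simp only [← radialField_half_zero]
  exact le_of_tendsto (tendsto_advectionForm_radialField_half y g g).norm
    (eventually_nhdsWithin_of_forall fun δ hδ ↦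
      norm_advectionForm_radialField_half_le_homSobolevNorm_sq hd hδ y g)

end Morawetz

lemma sobSq_eq_homSobolevNorm_sq (s : ℝ) (g : 𝓢(E3, ℂ)) :
    sobSq s (fun x ↦ g x) = homSobolevNorm s g ^ 2 := by
  rw [homSobolevNorm_sq]
  rfl

lemma morAction_eq_im_integral (g : 𝓢(E3, ℂ)) (y : E3) :
    morAction (fun x ↦ g x) y =
      (∫ x, inner ℂ (g x) (fderiv ℝ g x (‖x - y‖⁻¹ • (x - y)))).im := by
  have hint := integrable_advection (measurable_radialField (1 / 2) 0 y).aestronglyMeasurable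
    (norm_radialField_half_le_one le_rfl y) g g
  simp only [radialField_half_zero] at hint
  rw [morAction, ← RCLike.im_to_complex, ← integral_im hint]
  congr with x
  have hcoord : fderiv ℝ g x (x - y) = ∑ i, (x i - y i) • pd g i x := by
    rw [← sum_inner_smul_apply (EuclideanSpace.basisFun (Fin 3) ℝ) (fderiv ℝ g x) (x - y)]
    simp [pd, e3, EuclideanSpace.inner_single_left]
  rw [map_smul, hcoord, Finset.smul_sum, inner_sum, map_sum]
  refine Finset.sum_congr rfl fun i _ ↦ ?_
  rw [smul_smul, inner_smul_right_eq_smul, RCLike.inner_apply, RCLike.smul_im, massCur, mul_comm,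
    mul_comm (pd g i x), ← div_eq_inv_mul]
  rfl

/-- There is `C > 0` so that for every Schwartz `g : ℝ³ → ℂ` and every
`y ∈ ℝ³`, the Morawetz action of `g` centered at `y` is bounded by `C ‖g‖²_{Ḣ^{1/2}}`. -/
theorem morawetz_action_Hhalf_bound :
    ∃ C > (0:ℝ), ∀ (g : SchwartzMap E3 ℂ) (y : E3),
      |morAction (fun x => g x) y| ≤ C * sobSq (1/2) (fun x => g x) := by
  refine ⟨336 * π, by positivity, fun g y ↦ ?_⟩
  rw [morAction_eq_im_integral, sobSq_eq_homSobolevNorm_sq]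
  exact (abs_im_le_norm _).trans (morawetz_action_Hhalf_bound_general (by simp) g y)
end
end

section
/- There is a constant C > 0 such that for every Schwartz function g : ℝ³ → ℂ, the ℝ³-vector-valued function h(x) = (x/|x|) g(x) (which lies in L²(ℝ³)) satisfies ‖h‖_{Ḣ^{1/2}(ℝ³)} ≤ C ‖g‖_{Ḣ^{1/2}(ℝ³)}. -/
open MeasureTheory Real Complex Filter
open scoped FourierTransform ContDiff ENNReal

noncomputable section

/-
Plancherel's theorem turns the Gagliardo energy `∬ |f(x+z) - f(x)|² |z|^{-d-2s} dx dz` into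
`∫ S(ξ) |𝓕 f(ξ)|² dξ`, and rotation invariance and scaling force `S(ξ) = c |ξ|^{2s}`; so it suffices
to bound the Gagliardo energy of `m g` for a bounded multiplier `m` with
`|x| |m(y) - m(x)| ≤ A |y - x|`, such as a coordinate of `x/|x|`. Splitting the difference of `m g`
by the product rule leaves `∫ |g(x)|² ∫ |m(x+z) - m(x)|² |z|^{-d-2s} dz dx`, whose inner integral is
at most a constant times `|x|^{-2s}`, and the fractional Hardy inequality finishes the proof.

For Hardy, compare `f(x)` with `f(y)` and average over `|y| ≥ L|x|`: the left side carries
`L^{-2s}`, the term in `f(y)` is by Tonelli the Hardy energy itself with a factor `L^{-d}`, and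
since `2s < d` it can be absorbed for large `L`.
-/

open Module
open scoped NNReal RealInnerProductSpace

variable {E F 𝕜 : Type*} {s : ℝ}

theorem enorm_add_sq_le [NormedAddCommGroup F] (a b : F) :
    ‖a + b‖ₑ ^ 2 ≤ 2 * (‖a‖ₑ ^ 2 + ‖b‖ₑ ^ 2) := by
  have h : ‖a + b‖₊ ^ 2 ≤ 2 * (‖a‖₊ ^ 2 + ‖b‖₊ ^ 2) :=
    (pow_le_pow_left₀ zero_le (nnnorm_add_le a b) 2).trans add_sq_le
  simp only [enorm_eq_nnnorm]
  exact_mod_cast h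

theorem rpow_neg_le_two_rpow_mul_rpow_neg {a b : ℝ≥0∞} {p : ℝ} (hp : 0 ≤ p) (h : a ≤ 2 * b) :
    b ^ (-p) ≤ 2 ^ p * a ^ (-p) := by
  have hab : a ^ p ≤ 2 ^ p * b ^ p := by
    rw [← ENNReal.mul_rpow_of_nonneg _ _ hp]
    gcongr
  calc b ^ (-p) = 2 ^ p * (2 ^ p * b ^ p)⁻¹ := by
        rw [ENNReal.mul_inv (.inl (by simp)) (.inl (by finiteness)), ← mul_assoc,
          ENNReal.mul_inv_cancel (by simp) (by finiteness), one_mul, ENNReal.rpow_neg]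
    _ ≤ 2 ^ p * a ^ (-p) := by
        rw [ENNReal.rpow_neg]
        gcongr

section Levy

variable [NormedAddCommGroup E] [NormedSpace ℝ E] [MeasurableSpace E] (μ : Measure E)

/-- The Lévy measure `|z|^{-d-2s} dz` of the isotropic `2s`-stable process in dimension `d`, which
is the weight of the differences in the Gagliardo seminorm of order `s`. -/
def stableLevyMeasure (s : ℝ) : Measure E :=
  μ.withDensity fun z ↦ ‖z‖ₑ ^ (-(finrank ℝ E + 2 * s))

instance [SFinite μ] : SFinite (stableLevyMeasure μ s) :=
  inferInstanceAs (SFinite (μ.withDensity _))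

theorem stableLevyMeasure_absolutelyContinuous : stableLevyMeasure μ s ≪ μ :=
  withDensity_absolutelyContinuous _ _

variable [BorelSpace E]

theorem lintegral_stableLevyMeasure {Φ : E → ℝ≥0∞} (hΦ : AEMeasurable Φ μ) :
    ∫⁻ z, Φ z ∂stableLevyMeasure μ s = ∫⁻ z, ‖z‖ₑ ^ (-(finrank ℝ E + 2 * s)) * Φ z ∂μ :=
  lintegral_withDensity_eq_lintegral_mul₀ (by fun_prop) hΦ

variable {μ} in
theorem setLIntegral_stableLevyMeasure_le [μ.IsAddLeftInvariant] {Φ : E → ℝ≥0∞}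
    (hΦ : AEMeasurable Φ μ) (hs : 0 < s) (x : E) :
    ∫⁻ y in (Metric.ball 0 ‖x‖)ᶜ, Φ y ∂stableLevyMeasure μ s ≤
      2 ^ (finrank ℝ E + 2 * s) * ∫⁻ z, Φ (x + z) ∂stableLevyMeasure μ s := by
  set p : ℝ := finrank ℝ E + 2 * s with hp
  have hS : MeasurableSet (Metric.ball (0 : E) ‖x‖)ᶜ := measurableSet_ball.compl
  have hweight {y : E} (hy : y ∈ (Metric.ball 0 ‖x‖)ᶜ) :
      ‖y‖ₑ ^ (-p) ≤ 2 ^ p * ‖-x + y‖ₑ ^ (-p) := by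
    have hxy : ‖-x + y‖ₑ ≤ 2 * ‖y‖ₑ := calc
      ‖-x + y‖ₑ ≤ ‖x‖ₑ + ‖y‖ₑ := by simpa using enorm_add_le (-x) y
      _ ≤ 2 * ‖y‖ₑ := by
        rw [two_mul]
        gcongr
        exact enorm_le_iff_norm_le.mpr (by simpa using hy)
    exact rpow_neg_le_two_rpow_mul_rpow_neg (by positivity) hxy
  have hΦx : AEMeasurable (fun z ↦ Φ (x + z)) μ :=
    hΦ.comp_quasiMeasurePreserving (measurePreserving_add_left μ x).quasiMeasurePreserving
  rw [← lintegral_indicator hS, lintegral_stableLevyMeasure μ (hΦ.indicator hS),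
    lintegral_stableLevyMeasure μ hΦx,
    ← lintegral_add_left_eq_self (fun z ↦ ‖z‖ₑ ^ (-p) * Φ (x + z)) (-x),
    ← lintegral_const_mul' _ _ (by simp [hp])]
  refine lintegral_mono fun y ↦ ?_
  by_cases hy : y ∈ (Metric.ball 0 ‖x‖)ᶜ
  · rw [Set.indicator_of_mem hy, add_neg_cancel_left, ← mul_assoc]
    gcongr
    exact hweight hy
  · simp [hy]

variable [FiniteDimensional ℝ E] [μ.IsAddHaarMeasure]

theorem stableLevyMeasure_isOpenPosMeasure (hs : 0 < s) :
    (stableLevyMeasure μ s).IsOpenPosMeasure := by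
  refine (withDensity_absolutelyContinuous' (by fun_prop) (ae_of_all _ fun z ↦ ?_)).isOpenPosMeasure
  simpa [ENNReal.rpow_eq_zero_iff] using fun _ ↦
    (neg_nonpos.mpr (by positivity)).trans (finrank ℝ E).cast_nonneg

theorem stableLevyMeasure_compl_unit_ball_pos [Nontrivial E] (hs : 0 < s) :
    0 < stableLevyMeasure μ s (Metric.ball 0 1)ᶜ := by
  have := stableLevyMeasure_isOpenPosMeasure μ hs
  obtain ⟨z, hz⟩ := NormedSpace.exists_lt_norm ℝ E 1
  refine (Metric.isClosed_closedBall.isOpen_compl.measure_pos _ ⟨z, ?_⟩).trans_le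
    (measure_mono (Set.compl_subset_compl.mpr Metric.ball_subset_closedBall))
  simpa using hz

theorem stableLevyMeasure_compl_unit_ball_lt_top (hs : 0 < s) :
    stableLevyMeasure μ s (Metric.ball 0 1)ᶜ < ⊤ := by
  set p : ℝ := finrank ℝ E + 2 * s
  have hp₀ : 0 ≤ p := by positivity
  rw [stableLevyMeasure, withDensity_apply _ measurableSet_ball.compl]
  calc ∫⁻ z in (Metric.ball 0 1)ᶜ, ‖z‖ₑ ^ (-p) ∂μ
      ≤ ∫⁻ z in (Metric.ball 0 1)ᶜ, 2 ^ p * ENNReal.ofReal ((1 + ‖z‖) ^ (-p)) ∂μ := by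
        refine setLIntegral_mono' measurableSet_ball.compl fun z hz ↦ ?_
        have hz' : 1 ≤ ‖z‖ := by simpa using hz
        rw [← ENNReal.ofReal_rpow_of_pos (by positivity)]
        refine rpow_neg_le_two_rpow_mul_rpow_neg hp₀ ?_
        rw [← ofReal_norm, ← ENNReal.ofReal_ofNat, ← ENNReal.ofReal_mul zero_le_two]
        exact ENNReal.ofReal_le_ofReal (by linarith)
    _ ≤ 2 ^ p * ∫⁻ z, ENNReal.ofReal ((1 + ‖z‖) ^ (-p)) ∂μ := by
        rw [← lintegral_const_mul' _ _ (by simp)]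
        exact setLIntegral_le_lintegral _ _
    _ < ⊤ := ENNReal.mul_lt_top (by finiteness)
        (finite_integral_one_add_norm (by linarith : (finrank ℝ E : ℝ) < p))

variable {μ}

theorem lintegral_comp_smul_stableLevyMeasure {Φ : E → ℝ≥0∞} (hΦ : Measurable Φ) {r : ℝ}
    (hr : r ≠ 0) :
    ∫⁻ z, Φ (r • z) ∂stableLevyMeasure μ s =
      ‖r‖ₑ ^ (2 * s) * ∫⁻ z, Φ z ∂stableLevyMeasure μ s := by
  set p : ℝ := finrank ℝ E + 2 * s with hp
  have hr₀ : ‖r‖ₑ ≠ 0 := enorm_ne_zero.mpr hr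
  have hΨ : Measurable fun z : E ↦ ‖z‖ₑ ^ (-p) * Φ z := by fun_prop
  have hJ : ENNReal.ofReal |(r ^ finrank ℝ E)⁻¹| = ‖r‖ₑ ^ (-(finrank ℝ E : ℝ)) := by
    rw [← Real.enorm_eq_ofReal_abs, enorm_inv (pow_ne_zero _ hr), enorm_pow, ENNReal.rpow_neg,
      ENNReal.rpow_natCast]
  rw [lintegral_stableLevyMeasure μ (by fun_prop), lintegral_stableLevyMeasure μ hΦ.aemeasurable]
  calc ∫⁻ z, ‖z‖ₑ ^ (-p) * Φ (r • z) ∂μ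
      = ∫⁻ z, ‖r‖ₑ ^ p * (‖r • z‖ₑ ^ (-p) * Φ (r • z)) ∂μ := by
        refine lintegral_congr fun z ↦ ?_
        rw [enorm_smul, ENNReal.mul_rpow_of_ne_top enorm_ne_top enorm_ne_top, ← mul_assoc,
          ← mul_assoc, ← ENNReal.rpow_add _ _ hr₀ enorm_ne_top, add_neg_cancel, ENNReal.rpow_zero,
          one_mul]
    _ = ‖r‖ₑ ^ p * ∫⁻ z, ‖z‖ₑ ^ (-p) * Φ z ∂(μ.map (r • ·)) := by
        rw [lintegral_map hΨ (measurable_const_smul r), lintegral_const_mul _ (by fun_prop)]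
    _ = ‖r‖ₑ ^ (2 * s) * ∫⁻ z, ‖z‖ₑ ^ (-p) * Φ z ∂μ := by
        rw [Measure.map_addHaar_smul μ hr, lintegral_smul_measure, smul_eq_mul, ← mul_assoc, hJ,
          ← ENNReal.rpow_add _ _ hr₀ enorm_ne_top, hp, add_neg_cancel_comm]

theorem stableLevyMeasure_compl_ball {r : ℝ} (hr : 0 < r) :
    stableLevyMeasure μ s (Metric.ball 0 r)ᶜ =
      ENNReal.ofReal r ^ (-(2 * s)) * stableLevyMeasure μ s (Metric.ball 0 1)ᶜ := by
  have h (t : ℝ) : MeasurableSet (Metric.ball (0 : E) t)ᶜ := measurableSet_ball.compl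
  have hpre : (r⁻¹ • · : E → E) ⁻¹' (Metric.ball 0 1)ᶜ = (Metric.ball 0 r)ᶜ := by
    ext z
    simp [norm_smul, abs_of_pos hr, inv_mul_eq_div, one_le_div hr]
  calc stableLevyMeasure μ s (Metric.ball 0 r)ᶜ
      = ∫⁻ z, (Metric.ball (0 : E) 1)ᶜ.indicator 1 (r⁻¹ • z) ∂stableLevyMeasure μ s := by
        rw [← lintegral_indicator_one (h r), ← hpre]
        rfl
    _ = ENNReal.ofReal r ^ (-(2 * s)) * stableLevyMeasure μ s (Metric.ball 0 1)ᶜ := by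
        rw [lintegral_comp_smul_stableLevyMeasure (measurable_one.indicator (h 1))
          (inv_ne_zero hr.ne'), lintegral_indicator_one (h 1), enorm_inv hr.ne',
          Real.enorm_of_nonneg hr.le, ENNReal.inv_rpow, ENNReal.rpow_neg]

theorem lintegral_min_one_enorm_sq_stableLevyMeasure_lt_top [Nontrivial E] (hs₀ : 0 < s)
    (hs₁ : s < 1) : ∫⁻ z, min 1 (‖z‖ₑ ^ 2) ∂stableLevyMeasure μ s < ⊤ := by
  set p : ℝ := finrank ℝ E + 2 * s with hp
  have hpow {y a : ℝ} (hy : 0 < y) :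
      y ^ (finrank ℝ E - 1) * (y ^ (-p) * y ^ a) = y ^ (a - 2 * s - 1) := by
    rw [← Real.rpow_natCast, ← Real.rpow_add hy, ← Real.rpow_add hy,
      Nat.cast_sub (finrank_pos (R := ℝ) (M := E)), hp]
    push_cast
    ring_nf
  have hintegrable : Integrable (fun z : E ↦ ‖z‖ ^ (-p) * min 1 (‖z‖ ^ 2)) μ := by
    refine (integrable_fun_norm_addHaar μ (f := fun y ↦ y ^ (-p) * min 1 (y ^ 2))).mpr ?_
    rw [← Set.Ioo_union_Ici_eq_Ioi zero_lt_one]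
    refine .union ?_ ?_
    · refine ((intervalIntegral.integrableOn_Ioo_rpow_iff (s := 2 - 2 * s - 1) one_pos).mpr
        (by linarith)).congr_fun (fun y hy ↦ ?_) measurableSet_Ioo
      beta_reduce
      rw [← hpow hy.1, min_eq_right (pow_le_one₀ hy.1.le hy.2.le), Real.rpow_two, smul_eq_mul]
    · rw [integrableOn_Ici_iff_integrableOn_Ioi]
      refine (integrableOn_Ioi_rpow_of_lt (a := 0 - 2 * s - 1) (by linarith) one_pos).congr_fun
        (fun y hy ↦ ?_) measurableSet_Ioi
      beta_reduce
      rw [← hpow (zero_lt_one.trans hy), min_eq_left (one_le_pow₀ hy.le), Real.rpow_zero,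
        smul_eq_mul]
  rw [lintegral_stableLevyMeasure μ (by fun_prop)]
  refine (lintegral_congr_ae ?_).trans_lt hintegrable.hasFiniteIntegral
  filter_upwards [Measure.ae_ne μ 0] with z hz
  rw [Real.enorm_of_nonneg (by positivity), ENNReal.ofReal_mul (by positivity), ENNReal.ofReal_min,
    ← ENNReal.ofReal_rpow_of_pos (norm_pos_iff.mpr hz), ENNReal.ofReal_pow (norm_nonneg z),
    ofReal_norm, ENNReal.ofReal_one]

end Levy

section Gagliardo

variable [NormedAddCommGroup E] [MeasurableSpace E] [NormedAddCommGroup F] {μ : Measure E}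
  {f : E → F}

variable (μ) in
/-- The weighted energy `∫ |f(x)|² |x|^{-2s} dx` of the fractional Hardy inequality. -/
def hardyEnergy (s : ℝ) (f : E → F) : ℝ≥0∞ :=
  ∫⁻ x, ‖f x‖ₑ ^ 2 * ‖x‖ₑ ^ (-(2 * s)) ∂μ

-- Cutting off near the origin makes the energy finite, as absorbing it into the left side requires.
theorem hardyEnergy_indicator_lt_top (hs : 0 < s) (hf : MemLp f 2 μ) {ε : ℝ} (hε : 0 < ε) :
    hardyEnergy μ s ((Metric.ball 0 ε)ᶜ.indicator f) < ⊤ := by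
  have hf₂ : ∫⁻ x, ‖f x‖ₑ ^ 2 ∂μ < ⊤ := by
    simpa using lintegral_rpow_enorm_lt_top_of_eLpNorm_lt_top two_ne_zero ENNReal.ofNat_ne_top hf.2
  calc hardyEnergy μ s ((Metric.ball 0 ε)ᶜ.indicator f)
      ≤ ∫⁻ x, ‖f x‖ₑ ^ 2 * ENNReal.ofReal ε ^ (-(2 * s)) ∂μ := by
        refine lintegral_mono fun x ↦ ?_
        by_cases hx : x ∈ (Metric.ball 0 ε)ᶜ
        · have hεx : ENNReal.ofReal ε ≤ ‖x‖ₑ := by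
            rw [← ofReal_norm]
            exact ENNReal.ofReal_le_ofReal (by simpa using hx)
          rw [Set.indicator_of_mem hx, ENNReal.rpow_neg, ENNReal.rpow_neg]
          gcongr
        · simp [Set.indicator_of_notMem hx]
    _ = (∫⁻ x, ‖f x‖ₑ ^ 2 ∂μ) * ENNReal.ofReal ε ^ (-(2 * s)) :=
        lintegral_mul_const'' _ (hf.1.enorm.pow_const 2)
    _ < ⊤ := ENNReal.mul_lt_top hf₂ (by
        simpa [ENNReal.rpow_neg] using ENNReal.rpow_pos (by simpa using hε)
          ENNReal.ofReal_ne_top)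

variable [NormedSpace ℝ E]

variable (μ) in
/-- The squared Gagliardo seminorm `∬ |f(x+z) - f(x)|² |z|^{-d-2s} dx dz`, written as an integral
over the product so that either variable can be integrated first. -/
def gagliardoEnergy (s : ℝ) (f : E → F) : ℝ≥0∞ :=
  ∫⁻ q : E × E, ‖f (q.1 + q.2) - f q.1‖ₑ ^ 2 ∂μ.prod (stableLevyMeasure μ s)

variable [BorelSpace E] [FiniteDimensional ℝ E] [μ.IsAddHaarMeasure]

theorem aemeasurable_enorm_sub_sq_prod (hf : AEStronglyMeasurable f μ) :
    AEMeasurable (fun q : E × E ↦ ‖f (q.1 + q.2) - f q.1‖ₑ ^ 2)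
      (μ.prod (stableLevyMeasure μ s)) := by
  have hadd : Measure.QuasiMeasurePreserving (fun q : E × E ↦ q.1 + q.2)
      (μ.prod (stableLevyMeasure μ s)) μ :=
    (quasiMeasurePreserving_add μ μ).mono_left
      (Measure.AbsolutelyContinuous.rfl.prod (stableLevyMeasure_absolutelyContinuous μ))
  exact ((hf.comp_quasiMeasurePreserving hadd).sub hf.comp_fst).enorm.pow_const 2

theorem gagliardoEnergy_eq_lintegral (hf : AEStronglyMeasurable f μ) :
    gagliardoEnergy μ s f = ∫⁻ x, ∫⁻ z, ‖f (x + z) - f x‖ₑ ^ 2 ∂stableLevyMeasure μ s ∂μ :=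
  lintegral_prod _ (aemeasurable_enorm_sub_sq_prod hf)

theorem gagliardoEnergy_eq_lintegral_symm (hf : AEStronglyMeasurable f μ) :
    gagliardoEnergy μ s f = ∫⁻ z, ∫⁻ x, ‖f (x + z) - f x‖ₑ ^ 2 ∂μ ∂stableLevyMeasure μ s :=
  lintegral_prod_symm _ (aemeasurable_enorm_sub_sq_prod hf)

theorem hardyEnergy_pointwise_le (hs : 0 < s) (hf : AEStronglyMeasurable f μ) {L : ℝ} (hL : 1 ≤ L)
    {x : E} (hx : x ≠ 0) :
    ENNReal.ofReal L ^ (-(2 * s)) * stableLevyMeasure μ s (Metric.ball 0 1)ᶜ *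
        (‖f x‖ₑ ^ 2 * ‖x‖ₑ ^ (-(2 * s))) ≤
      2 * (2 ^ (finrank ℝ E + 2 * s) * ∫⁻ z, ‖f (x + z) - f x‖ₑ ^ 2 ∂stableLevyMeasure μ s +
        ∫⁻ y in (Metric.ball 0 (L * ‖x‖))ᶜ, ‖f y‖ₑ ^ 2 ∂stableLevyMeasure μ s) := by
  have hx' := norm_pos_iff.mpr hx
  have hdiff : AEMeasurable (fun y ↦ ‖f y - f x‖ₑ ^ 2) μ :=
    (hf.sub aestronglyMeasurable_const).enorm.pow_const 2
  have hsub : (Metric.ball 0 (L * ‖x‖))ᶜ ⊆ (Metric.ball (0 : E) ‖x‖)ᶜ :=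
    Set.compl_subset_compl.mpr (Metric.ball_subset_ball (le_mul_of_one_le_left hx'.le hL))
  calc ENNReal.ofReal L ^ (-(2 * s)) * stableLevyMeasure μ s (Metric.ball 0 1)ᶜ *
        (‖f x‖ₑ ^ 2 * ‖x‖ₑ ^ (-(2 * s)))
      = ∫⁻ _ in (Metric.ball 0 (L * ‖x‖))ᶜ, ‖f x‖ₑ ^ 2 ∂stableLevyMeasure μ s := by
        rw [setLIntegral_const, stableLevyMeasure_compl_ball (r := L * ‖x‖) (by positivity),
          ENNReal.ofReal_mul (by positivity), ofReal_norm,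
          ENNReal.mul_rpow_of_ne_top ENNReal.ofReal_ne_top enorm_ne_top]
        ring
    _ ≤ ∫⁻ y in (Metric.ball 0 (L * ‖x‖))ᶜ, 2 * (‖f y - f x‖ₑ ^ 2 + ‖f y‖ₑ ^ 2)
          ∂stableLevyMeasure μ s := lintegral_mono fun y ↦ by
        simpa [enorm_sub_rev] using enorm_add_sq_le (f x - f y) (f y)
    _ = 2 * (∫⁻ y in (Metric.ball 0 (L * ‖x‖))ᶜ, ‖f y - f x‖ₑ ^ 2 ∂stableLevyMeasure μ s +
          ∫⁻ y in (Metric.ball 0 (L * ‖x‖))ᶜ, ‖f y‖ₑ ^ 2 ∂stableLevyMeasure μ s) := by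
        rw [lintegral_const_mul' _ _ ENNReal.ofNat_ne_top, lintegral_add_left'
          (hdiff.mono_ac (stableLevyMeasure_absolutelyContinuous μ)).restrict]
    _ ≤ _ := by
        gcongr
        exact (lintegral_mono_set hsub).trans (setLIntegral_stableLevyMeasure_le hdiff hs x)

theorem lintegral_setLIntegral_compl_ball_stableLevyMeasure [Nontrivial E] {Φ : E → ℝ≥0∞}
    (hΦ : AEMeasurable Φ μ) {L : ℝ} (hL : 0 < L) :
    ∫⁻ x, ∫⁻ y in (Metric.ball 0 (L * ‖x‖))ᶜ, Φ y ∂stableLevyMeasure μ s ∂μ =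
      ENNReal.ofReal L ^ (-(finrank ℝ E : ℝ)) * μ (Metric.ball 0 1) *
        ∫⁻ y, Φ y * ‖y‖ₑ ^ (-(2 * s)) ∂μ := by
  set d : ℝ := (finrank ℝ E : ℝ) with hd
  have hS : MeasurableSet {q : E × E | L * ‖q.1‖ ≤ ‖q.2‖} :=
    measurableSet_le (by fun_prop) (by fun_prop)
  have hind (x y : E) : (Metric.ball 0 (L * ‖x‖))ᶜ.indicator Φ y =
      {q : E × E | L * ‖q.1‖ ≤ ‖q.2‖}.indicator (fun q ↦ Φ q.2) (x, y) := by
    simp [Set.indicator]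
  have hvol (y : E) : μ (Metric.closedBall 0 (‖y‖ / L)) =
      ‖y‖ₑ ^ d * (ENNReal.ofReal L ^ (-d) * μ (Metric.ball 0 1)) := by
    rw [Measure.addHaar_closedBall _ _ (by positivity), ENNReal.ofReal_pow (by positivity),
      ENNReal.ofReal_div_of_pos hL, ofReal_norm, ← ENNReal.rpow_natCast,
      ENNReal.div_rpow_of_nonneg _ _ (by positivity), ENNReal.rpow_neg, div_eq_mul_inv, mul_assoc]
  calc ∫⁻ x, ∫⁻ y in (Metric.ball 0 (L * ‖x‖))ᶜ, Φ y ∂stableLevyMeasure μ s ∂μ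
      = ∫⁻ x, ∫⁻ y, {q : E × E | L * ‖q.1‖ ≤ ‖q.2‖}.indicator (fun q ↦ Φ q.2) (x, y)
          ∂stableLevyMeasure μ s ∂μ := by
        simp_rw [← hind, lintegral_indicator measurableSet_ball.compl]
    _ = ∫⁻ y, ∫⁻ x, {q : E × E | L * ‖q.1‖ ≤ ‖q.2‖}.indicator (fun q ↦ Φ q.2) (x, y)
          ∂μ ∂stableLevyMeasure μ s :=
        lintegral_lintegral_swap
          ((hΦ.mono_ac (stableLevyMeasure_absolutelyContinuous μ)).comp_snd.indicator hS)
    _ = ∫⁻ y, Φ y * μ (Metric.closedBall 0 (‖y‖ / L)) ∂stableLevyMeasure μ s := by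
        refine lintegral_congr fun y ↦ ?_
        rw [← setLIntegral_const, ← lintegral_indicator measurableSet_closedBall]
        simp [Set.indicator, le_div_iff₀' hL]
    _ = ∫⁻ y, ENNReal.ofReal L ^ (-d) * μ (Metric.ball 0 1) * (Φ y * ‖y‖ₑ ^ (-(2 * s))) ∂μ := by
        simp_rw [hvol]
        rw [lintegral_stableLevyMeasure μ (by fun_prop)]
        refine lintegral_congr_ae ?_
        filter_upwards [Measure.ae_ne μ 0] with y hy
        rw [show -(2 * s) = -(finrank ℝ E + 2 * s) + d by rw [hd]; ring,
          ENNReal.rpow_add _ _ (enorm_ne_zero.mpr hy) enorm_ne_top]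
        ring
    _ = ENNReal.ofReal L ^ (-d) * μ (Metric.ball 0 1) * ∫⁻ y, Φ y * ‖y‖ₑ ^ (-(2 * s)) ∂μ :=
        lintegral_const_mul'' _ (by fun_prop)

theorem exists_one_le_mul_rpow_lt {a b : ℝ≥0∞} (ha : a ≠ ⊤) (hb : b ≠ 0) {p q : ℝ} (hpq : p < q) :
    ∃ L : ℝ, 1 ≤ L ∧ ENNReal.ofReal L ^ (-q) * a < ENNReal.ofReal L ^ (-p) * b := by
  have htop : Tendsto (fun L : ℝ ↦ ENNReal.ofReal L ^ (q - p)) atTop (nhds ⊤) :=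
    (ENNReal.tendsto_rpow_at_top (sub_pos.mpr hpq)).comp ENNReal.tendsto_ofReal_atTop
  obtain ⟨L, hlt, hL⟩ := ((htop.eventually_const_lt
    (ENNReal.div_lt_top ha hb)).and (eventually_ge_atTop 1)).exists
  have hL₀ : ENNReal.ofReal L ≠ 0 := by simpa using zero_lt_one.trans_le hL
  refine ⟨L, hL, ?_⟩
  rw [show -p = -q + (q - p) by ring, ENNReal.rpow_add _ _ hL₀ ENNReal.ofReal_ne_top, mul_assoc]
  refine (ENNReal.mul_lt_mul_iff_right (by simp [hL₀]) (by simp [hL₀])).mpr ?_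
  exact (ENNReal.div_lt_iff (.inl hb) (.inr ha)).mp hlt

theorem hardyEnergy_indicator_le_add [Nontrivial E] (hs : 0 < s) (hf : AEStronglyMeasurable f μ)
    {L : ℝ} (hL : 1 ≤ L) {ε : ℝ} (hε : 0 < ε) :
    ENNReal.ofReal L ^ (-(2 * s)) * stableLevyMeasure μ s (Metric.ball 0 1)ᶜ *
        hardyEnergy μ s ((Metric.ball 0 ε)ᶜ.indicator f) ≤
      2 * (2 ^ (finrank ℝ E + 2 * s) * gagliardoEnergy μ s f +
        ENNReal.ofReal L ^ (-(finrank ℝ E : ℝ)) * μ (Metric.ball 0 1) *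
          hardyEnergy μ s ((Metric.ball 0 ε)ᶜ.indicator f)) := by
  set h : E → F := (Metric.ball 0 ε)ᶜ.indicator f
  have hh : AEMeasurable (fun x ↦ ‖h x‖ₑ ^ 2) μ :=
    (hf.indicator measurableSet_ball.compl).enorm.pow_const 2
  have hpoint (x : E) : ENNReal.ofReal L ^ (-(2 * s)) * stableLevyMeasure μ s (Metric.ball 0 1)ᶜ *
        (‖h x‖ₑ ^ 2 * ‖x‖ₑ ^ (-(2 * s))) ≤
      2 * (2 ^ (finrank ℝ E + 2 * s) * ∫⁻ z, ‖f (x + z) - f x‖ₑ ^ 2 ∂stableLevyMeasure μ s +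
        ∫⁻ y in (Metric.ball 0 (L * ‖x‖))ᶜ, ‖h y‖ₑ ^ 2 ∂stableLevyMeasure μ s) := by
    by_cases hx : x ∈ (Metric.ball 0 ε)ᶜ
    · have hx' : ε ≤ ‖x‖ := by simpa using hx
      have hfar : Set.EqOn (fun y ↦ ‖h y‖ₑ ^ 2) (fun y ↦ ‖f y‖ₑ ^ 2)
          (Metric.ball 0 (L * ‖x‖))ᶜ := fun y hy ↦ by
        have hy' : L * ‖x‖ ≤ ‖y‖ := by simpa using hy
        have : y ∈ (Metric.ball 0 ε)ᶜ := by simpa using by nlinarith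
        simp [h, this]
      rw [setLIntegral_congr_fun measurableSet_ball.compl hfar,
        show h x = f x from Set.indicator_of_mem hx f]
      exact hardyEnergy_pointwise_le hs hf hL (norm_pos_iff.mp (hε.trans_le hx'))
    · simp [h, Set.indicator_of_notMem hx]
  calc ENNReal.ofReal L ^ (-(2 * s)) * stableLevyMeasure μ s (Metric.ball 0 1)ᶜ * hardyEnergy μ s h
      = ∫⁻ x, ENNReal.ofReal L ^ (-(2 * s)) * stableLevyMeasure μ s (Metric.ball 0 1)ᶜ *
          (‖h x‖ₑ ^ 2 * ‖x‖ₑ ^ (-(2 * s))) ∂μ := (lintegral_const_mul'' _ (by fun_prop)).symm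
    _ ≤ ∫⁻ x, 2 * (2 ^ (finrank ℝ E + 2 * s) *
            ∫⁻ z, ‖f (x + z) - f x‖ₑ ^ 2 ∂stableLevyMeasure μ s +
          ∫⁻ y in (Metric.ball 0 (L * ‖x‖))ᶜ, ‖h y‖ₑ ^ 2 ∂stableLevyMeasure μ s) ∂μ :=
        lintegral_mono hpoint
    _ = _ := by
        have hinner := (aemeasurable_enorm_sub_sq_prod (s := s) hf).lintegral_prod_right'
        rw [lintegral_const_mul' _ _ ENNReal.ofNat_ne_top,
          lintegral_add_left' (hinner.const_mul _), lintegral_const_mul'' _ hinner,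
          ← gagliardoEnergy_eq_lintegral hf,
          lintegral_setLIntegral_compl_ball_stableLevyMeasure hh (zero_lt_one.trans_le hL)]
        rfl

theorem hardyEnergy_le_of_forall_indicator_le [Nontrivial E] (hf : AEStronglyMeasurable f μ)
    {B : ℝ≥0∞} (hB : ∀ ε > 0, hardyEnergy μ s ((Metric.ball 0 ε)ᶜ.indicator f) ≤ B) :
    hardyEnergy μ s f ≤ B := by
  have hcut (n : ℕ) : AEMeasurable
      (fun x ↦ ‖(Metric.ball 0 (1 / (n + 1) : ℝ))ᶜ.indicator f x‖ₑ ^ 2 * ‖x‖ₑ ^ (-(2 * s))) μ :=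
    ((hf.indicator measurableSet_ball.compl).enorm.pow_const 2).mul (by fun_prop)
  calc hardyEnergy μ s f
      = ∫⁻ x, liminf (fun n : ℕ ↦ ‖(Metric.ball 0 (1 / (n + 1) : ℝ))ᶜ.indicator f x‖ₑ ^ 2 *
          ‖x‖ₑ ^ (-(2 * s))) atTop ∂μ := by
        refine lintegral_congr_ae ?_
        filter_upwards [Measure.ae_ne μ 0] with x hx
        refine (Tendsto.liminf_eq (tendsto_const_nhds.congr' ?_)).symm
        filter_upwards [tendsto_one_div_add_atTop_nhds_zero_nat.eventually_le_const
          (norm_pos_iff.mpr hx)] with n hn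
        rw [Set.indicator_of_mem (by simpa using hn)]
    _ ≤ liminf (fun n : ℕ ↦ hardyEnergy μ s ((Metric.ball 0 (1 / (n + 1) : ℝ))ᶜ.indicator f))
          atTop := lintegral_liminf_le' hcut
    _ ≤ B := liminf_le_of_frequently_le' (Frequently.of_forall fun n ↦
        hB _ Nat.one_div_pos_of_nat)

theorem le_div_of_mul_le_add_mul {a b x y : ℝ≥0∞} (ha : a ≠ ⊤) (hx : x ≠ ⊤) (hba : b < a)
    (h : a * x ≤ y + b * x) : x ≤ y / (a - b) := by
  refine (ENNReal.le_div_iff_mul_le (.inl (tsub_pos_of_lt hba).ne')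
    (.inl (ENNReal.sub_ne_top ha))).mpr ?_
  rw [mul_comm, ENNReal.sub_mul fun _ _ ↦ hx]
  exact tsub_le_iff_right.mpr h

theorem exists_hardyEnergy_le (hs : 0 < s) (hd : 2 * s < finrank ℝ E) :
    ∃ C : ℝ≥0, ∀ f : E → F, MemLp f 2 μ → hardyEnergy μ s f ≤ C * gagliardoEnergy μ s f := by
  have : Nontrivial E := nontrivial_of_finrank_pos (R := ℝ)
    (by exact_mod_cast (mul_pos two_pos hs).trans hd)
  have hc := stableLevyMeasure_compl_unit_ball_lt_top μ hs
  obtain ⟨L, hL, hlt⟩ := exists_one_le_mul_rpow_lt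
    (ENNReal.mul_ne_top (ENNReal.ofNat_ne_top (n := 2))
      (measure_ball_lt_top (μ := μ) (x := 0) (r := 1)).ne)
    (stableLevyMeasure_compl_unit_ball_pos μ hs).ne' hd
  have hL₀ : ENNReal.ofReal L ≠ 0 := by simpa using zero_lt_one.trans_le hL
  set a := ENNReal.ofReal L ^ (-(2 * s)) * stableLevyMeasure μ s (Metric.ball 0 1)ᶜ
  set b := ENNReal.ofReal L ^ (-(finrank ℝ E : ℝ)) * (2 * μ (Metric.ball 0 1))
  have ha : a ≠ ⊤ := ENNReal.mul_ne_top (by simp [hL₀]) hc.ne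
  have hC : 2 * 2 ^ (finrank ℝ E + 2 * s) / (a - b) ≠ ⊤ :=
    ENNReal.div_ne_top (ENNReal.mul_ne_top ENNReal.ofNat_ne_top (by simp))
      (tsub_pos_of_lt hlt).ne'
  refine ⟨(2 * 2 ^ (finrank ℝ E + 2 * s) / (a - b)).toNNReal, fun f hf ↦
    hardyEnergy_le_of_forall_indicator_le hf.1 fun ε hε ↦ ?_⟩
  have habs : a * hardyEnergy μ s ((Metric.ball 0 ε)ᶜ.indicator f) ≤
      2 * 2 ^ (finrank ℝ E + 2 * s) * gagliardoEnergy μ s f +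
        b * hardyEnergy μ s ((Metric.ball 0 ε)ᶜ.indicator f) :=
    (hardyEnergy_indicator_le_add hs hf.1 hL hε).trans_eq (by ring)
  rw [ENNReal.coe_toNNReal hC, ← ENNReal.mul_div_right_comm]
  exact le_div_of_mul_le_add_mul ha (hardyEnergy_indicator_lt_top hs hf hε).ne hlt habs

end Gagliardo

section Multiplier

/-- A bounded multiplier that is Lipschitz at the scale of its argument, with the same constant `A`
for both bounds; bounded `0`-homogeneous functions that are Lipschitz on the unit sphere are the
typical example. -/
structure ScaledLipschitzWith [NormedAddCommGroup E] [NormedRing 𝕜] (A : ℝ≥0) (m : E → 𝕜) :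
    Prop where
  norm_le (x : E) : ‖m x‖ ≤ A
  norm_sub_mul_le (x y : E) : ‖m y - m x‖ * ‖x‖ ≤ A * ‖y - x‖

namespace ScaledLipschitzWith

variable [NormedAddCommGroup E] [NormedField 𝕜] {A : ℝ≥0} {m : E → 𝕜}

theorem enorm_le (hm : ScaledLipschitzWith A m) (x : E) : ‖m x‖ₑ ≤ A :=
  ENNReal.coe_le_coe.mpr (hm.norm_le x)

theorem continuousAt (hm : ScaledLipschitzWith A m) {x : E} (hx : x ≠ 0) : ContinuousAt m x := by
  refine continuousAt_of_locally_lipschitz one_pos (A / ‖x‖) fun y _ ↦ ?_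
  rw [dist_eq_norm, dist_eq_norm, div_mul_eq_mul_div, le_div_iff₀ (norm_pos_iff.mpr hx)]
  exact hm.norm_sub_mul_le x y

variable [NormedSpace ℝ E]

theorem enorm_add_sub_sq_le (hm : ScaledLipschitzWith A m) {x : E} (hx : x ≠ 0) (z : E) :
    ‖m (x + z) - m x‖ₑ ^ 2 ≤ 4 * A ^ 2 * min 1 (‖‖x‖⁻¹ • z‖ₑ ^ 2) := by
  have h₁ : ‖m (x + z) - m x‖ ^ 2 ≤ 4 * A ^ 2 * 1 := by
    rw [show 4 * (A : ℝ) ^ 2 * 1 = (A + A) ^ 2 by ring]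
    gcongr
    exact (norm_sub_le _ _).trans (add_le_add (hm.norm_le _) (hm.norm_le _))
  have h₂ : ‖m (x + z) - m x‖ ^ 2 ≤ 4 * A ^ 2 * ‖‖x‖⁻¹ • z‖ ^ 2 := by
    have h : ‖m (x + z) - m x‖ ≤ A * ‖‖x‖⁻¹ • z‖ := by
      rw [norm_smul, norm_inv, norm_norm, ← mul_assoc, mul_right_comm, ← div_eq_mul_inv,
        le_div_iff₀ (norm_pos_iff.mpr hx)]
      simpa using hm.norm_sub_mul_le x (x + z)
    calc ‖m (x + z) - m x‖ ^ 2 ≤ (A * ‖‖x‖⁻¹ • z‖) ^ 2 := by gcongr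
      _ ≤ 4 * A ^ 2 * ‖‖x‖⁻¹ • z‖ ^ 2 := by nlinarith [sq_nonneg (A * ‖‖x‖⁻¹ • z‖)]
  have h : ‖m (x + z) - m x‖₊ ^ 2 ≤ 4 * A ^ 2 * min 1 (‖‖x‖⁻¹ • z‖₊ ^ 2) := by
    rw [mul_min]
    exact le_min h₁ h₂
  simp only [enorm_eq_nnnorm]
  exact_mod_cast h

variable [MeasurableSpace E] [BorelSpace E] [FiniteDimensional ℝ E]
  {μ : Measure E} [μ.IsAddHaarMeasure]

theorem aestronglyMeasurable [Nontrivial E] (hm : ScaledLipschitzWith A m) :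
    AEStronglyMeasurable m μ := by
  rw [← restrict_compl_singleton (μ := μ) 0]
  exact ContinuousOn.aestronglyMeasurable (fun x hx ↦ (hm.continuousAt hx).continuousWithinAt)
    (measurableSet_singleton 0).compl

theorem lintegral_enorm_add_sub_sq_le (hm : ScaledLipschitzWith A m) {x : E} (hx : x ≠ 0) :
    ∫⁻ z, ‖m (x + z) - m x‖ₑ ^ 2 ∂stableLevyMeasure μ s ≤
      4 * A ^ 2 * (∫⁻ z, min 1 (‖z‖ₑ ^ 2) ∂stableLevyMeasure μ s) * ‖x‖ₑ ^ (-(2 * s)) := by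
  calc ∫⁻ z, ‖m (x + z) - m x‖ₑ ^ 2 ∂stableLevyMeasure μ s
      ≤ ∫⁻ z, 4 * A ^ 2 * min 1 (‖‖x‖⁻¹ • z‖ₑ ^ 2) ∂stableLevyMeasure μ s :=
        lintegral_mono fun z ↦ hm.enorm_add_sub_sq_le hx z
    _ = _ := by
        rw [lintegral_const_mul _ (by fun_prop), lintegral_comp_smul_stableLevyMeasure
          (Φ := fun z ↦ min 1 (‖z‖ₑ ^ 2)) (by fun_prop) (inv_ne_zero (norm_ne_zero_iff.mpr hx)),
          enorm_inv (norm_ne_zero_iff.mpr hx), enorm_norm, ENNReal.inv_rpow, ENNReal.rpow_neg]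
        ring

variable [NormedAddCommGroup F]

theorem lintegral_prod_enorm_sq_mul_le [Nontrivial E] (hm : ScaledLipschitzWith A m) {g : E → F}
    (hg : AEStronglyMeasurable g μ) :
    ∫⁻ q : E × E, ‖g q.1‖ₑ ^ 2 * ‖m (q.1 + q.2) - m q.1‖ₑ ^ 2 ∂μ.prod (stableLevyMeasure μ s) ≤
      4 * A ^ 2 * (∫⁻ z, min 1 (‖z‖ₑ ^ 2) ∂stableLevyMeasure μ s) * hardyEnergy μ s g := by
  have hmeas : AEMeasurable (fun q : E × E ↦ ‖g q.1‖ₑ ^ 2 * ‖m (q.1 + q.2) - m q.1‖ₑ ^ 2)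
      (μ.prod (stableLevyMeasure μ s)) :=
    (hg.comp_fst.enorm.pow_const 2).mul (aemeasurable_enorm_sub_sq_prod hm.aestronglyMeasurable)
  rw [lintegral_prod _ hmeas, hardyEnergy, ← lintegral_const_mul'' _ (by fun_prop)]
  refine lintegral_mono_ae ?_
  filter_upwards [Measure.ae_ne μ 0] with x hx
  rw [lintegral_const_mul' _ _ (by finiteness), mul_left_comm]
  gcongr
  exact hm.lintegral_enorm_add_sub_sq_le hx

variable [NormedSpace 𝕜 F]

theorem memLp_smul [Nontrivial E] (hm : ScaledLipschitzWith A m) {g : E → F} {p : ℝ≥0∞}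
    (hg : MemLp g p μ) : MemLp (fun x ↦ m x • g x) p μ := by
  refine hg.of_le_mul (hm.aestronglyMeasurable.smul hg.aestronglyMeasurable) (c := A)
    (ae_of_all _ fun x ↦ ?_)
  rw [norm_smul]
  gcongr
  exact hm.norm_le x

theorem integrable_smul [Nontrivial E] (hm : ScaledLipschitzWith A m) {g : E → F}
    (hg : Integrable g μ) : Integrable (fun x ↦ m x • g x) μ :=
  memLp_one_iff_integrable.mp (hm.memLp_smul (memLp_one_iff_integrable.mpr hg))

theorem gagliardoEnergy_smul_le [Nontrivial E] (hm : ScaledLipschitzWith A m) {g : E → F}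
    (hg : AEStronglyMeasurable g μ) :
    gagliardoEnergy μ s (fun x ↦ m x • g x) ≤ 2 * A ^ 2 * gagliardoEnergy μ s g +
      8 * A ^ 2 * (∫⁻ z, min 1 (‖z‖ₑ ^ 2) ∂stableLevyMeasure μ s) * hardyEnergy μ s g := by
  have hsplit (x z : E) : ‖m (x + z) • g (x + z) - m x • g x‖ₑ ^ 2 ≤
      2 * (A ^ 2 * ‖g (x + z) - g x‖ₑ ^ 2 + ‖g x‖ₑ ^ 2 * ‖m (x + z) - m x‖ₑ ^ 2) := calc
    ‖m (x + z) • g (x + z) - m x • g x‖ₑ ^ 2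
      = ‖m (x + z) • (g (x + z) - g x) + (m (x + z) - m x) • g x‖ₑ ^ 2 := by
        rw [smul_sub, sub_smul, sub_add_sub_cancel]
    _ ≤ 2 * (‖m (x + z) • (g (x + z) - g x)‖ₑ ^ 2 + ‖(m (x + z) - m x) • g x‖ₑ ^ 2) :=
        enorm_add_sq_le _ _
    _ ≤ _ := by
        rw [enorm_smul, enorm_smul, mul_pow, mul_pow, mul_comm (‖g x‖ₑ ^ 2)]
        gcongr
        exact hm.enorm_le _
  have hdiff := aemeasurable_enorm_sub_sq_prod (s := s) hg
  calc gagliardoEnergy μ s (fun x ↦ m x • g x)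
      ≤ ∫⁻ q : E × E, 2 * (A ^ 2 * ‖g (q.1 + q.2) - g q.1‖ₑ ^ 2 +
          ‖g q.1‖ₑ ^ 2 * ‖m (q.1 + q.2) - m q.1‖ₑ ^ 2) ∂μ.prod (stableLevyMeasure μ s) :=
        lintegral_mono fun q ↦ hsplit q.1 q.2
    _ = 2 * (A ^ 2 * gagliardoEnergy μ s g + ∫⁻ q : E × E,
          ‖g q.1‖ₑ ^ 2 * ‖m (q.1 + q.2) - m q.1‖ₑ ^ 2 ∂μ.prod (stableLevyMeasure μ s)) := by
        rw [lintegral_const_mul' _ _ ENNReal.ofNat_ne_top, lintegral_add_left' (hdiff.const_mul _),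
          lintegral_const_mul'' _ hdiff, gagliardoEnergy]
    _ ≤ 2 * (A ^ 2 * gagliardoEnergy μ s g + 4 * A ^ 2 *
          (∫⁻ z, min 1 (‖z‖ₑ ^ 2) ∂stableLevyMeasure μ s) * hardyEnergy μ s g) := by
        gcongr
        exact hm.lintegral_prod_enorm_sq_mul_le hg
    _ = _ := by ring

end ScaledLipschitzWith

theorem norm_normalize_sub_mul_le [NormedAddCommGroup E] [NormedSpace ℝ E] (x y : E) :
    ‖NormedSpace.normalize y - NormedSpace.normalize x‖ * ‖x‖ ≤ 2 * ‖y - x‖ := by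
  have key : ‖x‖ • (NormedSpace.normalize y - NormedSpace.normalize x) =
      (y - x) + (‖x‖ - ‖y‖) • NormedSpace.normalize y := by
    rw [smul_sub, sub_smul, NormedSpace.norm_smul_normalize, NormedSpace.norm_smul_normalize]
    abel
  have hle : ‖NormedSpace.normalize y‖ ≤ 1 := by
    rw [NormedSpace.normalize, norm_smul, norm_inv, norm_norm]
    exact inv_mul_le_one
  calc ‖NormedSpace.normalize y - NormedSpace.normalize x‖ * ‖x‖
      = ‖(y - x) + (‖x‖ - ‖y‖) • NormedSpace.normalize y‖ := by
        rw [← key, norm_smul, norm_norm, mul_comm]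
    _ ≤ ‖y - x‖ + |‖x‖ - ‖y‖| * ‖NormedSpace.normalize y‖ := by
        simpa [norm_smul] using norm_add_le (y - x) ((‖x‖ - ‖y‖) • NormedSpace.normalize y)
    _ ≤ ‖y - x‖ + ‖y - x‖ * 1 := by
        gcongr
        exact (abs_norm_sub_norm_le x y).trans_eq (norm_sub_rev x y)
    _ = 2 * ‖y - x‖ := by ring

theorem scaledLipschitzWith_coord_div_norm {ι : Type*} [Fintype ι] (i : ι) :
    ScaledLipschitzWith 2 fun x : EuclideanSpace ℝ ι ↦ ((x i / ‖x‖ : ℝ) : ℂ) where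
  norm_le x := by
    rw [Complex.norm_real, norm_div, norm_norm]
    exact (div_le_one_of_le₀ (PiLp.norm_apply_le x i) (norm_nonneg x)).trans one_le_two
  norm_sub_mul_le x y := by
    have hcoord (z : EuclideanSpace ℝ ι) : z i / ‖z‖ = NormedSpace.normalize z i := by
      simp [NormedSpace.normalize, inv_mul_eq_div]
    refine le_trans ?_ (norm_normalize_sub_mul_le x y)
    rw [← Complex.ofReal_sub, Complex.norm_real, hcoord, hcoord, ← PiLp.sub_apply]
    gcongr
    exact PiLp.norm_apply_le _ i

end Multiplier

section Fourier

variable [NormedAddCommGroup E] [InnerProductSpace ℝ E]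

theorem enorm_fourierChar_sub_one_sq_le (z ξ : E) :
    ‖(𝐞 ⟪z, ξ⟫ : ℂ) - 1‖ₑ ^ 2 ≤ ENNReal.ofReal (4 + (2 * π * ‖ξ‖) ^ 2) * min 1 (‖z‖ₑ ^ 2) := by
  have h₁ : ‖(𝐞 ⟪z, ξ⟫ : ℂ) - 1‖ ≤ 2 := by
    refine (norm_sub_le _ _).trans_eq ?_
    rw [Circle.norm_coe, norm_one, one_add_one_eq_two]
  have h₂ : ‖(𝐞 ⟪z, ξ⟫ : ℂ) - 1‖ ≤ 2 * π * ‖ξ‖ * ‖z‖ := calc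
    ‖(𝐞 ⟪z, ξ⟫ : ℂ) - 1‖ ≤ ‖2 * π * ⟪z, ξ⟫‖ := by
      rw [Real.fourierChar_apply, mul_comm]
      exact Real.norm_exp_I_mul_ofReal_sub_one_le
    _ = 2 * π * ‖⟪z, ξ⟫‖ := by rw [norm_mul, Real.norm_of_nonneg Real.two_pi_pos.le]
    _ ≤ 2 * π * (‖z‖ * ‖ξ‖) := by
      gcongr
      exact norm_inner_le_norm z ξ
    _ = 2 * π * ‖ξ‖ * ‖z‖ := by ring
  rw [← ofReal_norm, ← ofReal_norm, ← ENNReal.ofReal_pow (norm_nonneg _),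
    ← ENNReal.ofReal_pow (norm_nonneg _), ← ENNReal.ofReal_one, ← ENNReal.ofReal_min,
    ← ENNReal.ofReal_mul (by positivity)]
  refine ENNReal.ofReal_le_ofReal ?_
  rw [mul_min_of_nonneg _ _ (by positivity)]
  refine le_min ?_ ?_
  · nlinarith [norm_nonneg ((𝐞 ⟪z, ξ⟫ : ℂ) - 1), sq_nonneg (2 * π * ‖ξ‖)]
  · calc ‖(𝐞 ⟪z, ξ⟫ : ℂ) - 1‖ ^ 2 ≤ (2 * π * ‖ξ‖ * ‖z‖) ^ 2 := by gcongr
      _ ≤ (4 + (2 * π * ‖ξ‖) ^ 2) * ‖z‖ ^ 2 := by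
        rw [mul_pow]
        gcongr
        linarith

variable [FiniteDimensional ℝ E] [MeasurableSpace E] [BorelSpace E] [NormedAddCommGroup F]

section Plancherel

variable {f : E → F}

theorem continuous_fourier_of_integrable [NormedSpace ℂ F] (hf : Integrable f) : Continuous (𝓕 f) :=
  VectorFourier.fourierIntegral_continuous Real.continuous_fourierChar continuous_inner hf

variable [InnerProductSpace ℂ F] [CompleteSpace F]

theorem integral_fourier_smul_eq_smul_fourier (φ : SchwartzMap E ℂ)
    (hf : Integrable f) : ∫ x, 𝓕 φ x • f x = ∫ ξ, φ ξ • 𝓕 f ξ := by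
  have h := VectorFourier.integral_fourierIntegral_smul_eq_flip (μ := volume) (ν := volume)
    (L := innerₗ E) Real.continuous_fourierChar continuous_inner φ.integrable hf
  rw [flip_innerₗ] at h
  exact h

theorem fourier_ae_eq_coeFn_fourier_toLp (hf₁ : Integrable f)
    (hf₂ : MemLp f 2) : 𝓕 f =ᵐ[volume] (𝓕 (hf₂.toLp f) : Lp F 2 (volume : Measure E)) := by
  refine ae_eq_of_integral_contDiff_smul_eq
    (continuous_fourier_of_integrable hf₁).locallyIntegrable
    ((Lp.memLp _).locallyIntegrable one_le_two) fun g hg hgc ↦ ?_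
  let φ : SchwartzMap E ℂ := (hgc.comp_left (g := Complex.ofRealCLM) rfl).toSchwartzMap
    (by fun_prop)
  have hφ (x : E) (v : F) : φ x • v = g x • v := by simp [φ]
  calc ∫ ξ, g ξ • 𝓕 f ξ = ∫ ξ, φ ξ • 𝓕 f ξ := by simp_rw [hφ]
    _ = ∫ x, 𝓕 φ x • f x := (integral_fourier_smul_eq_smul_fourier φ hf₁).symm
    _ = ∫ x, 𝓕 φ x • hf₂.toLp f x := by
      refine integral_congr_ae ?_
      filter_upwards [hf₂.coeFn_toLp] with x hx
      rw [hx]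
    _ = ∫ ξ, φ ξ • (𝓕 (hf₂.toLp f) : Lp F 2 (volume : Measure E)) ξ := by
      have := congrArg (fun T ↦ T φ) (Lp.fourier_toTemperedDistribution_eq (hf₂.toLp f))
      simpa [TemperedDistribution.fourier_apply, Lp.toTemperedDistribution_apply] using this
    _ = _ := by simp_rw [hφ]

theorem lintegral_enorm_fourier_sq (hf₁ : Integrable f) (hf₂ : MemLp f 2) :
    ∫⁻ ξ, ‖𝓕 f ξ‖ₑ ^ 2 = ∫⁻ x, ‖f x‖ₑ ^ 2 := by
  have h (g : E → F) : ∫⁻ x, ‖g x‖ₑ ^ 2 = eLpNorm g 2 volume ^ 2 := by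
    simpa using (eLpNorm_nnreal_pow_eq_lintegral (f := g) (μ := volume) (p := 2) two_ne_zero).symm
  rw [h, h, eLpNorm_congr_ae (fourier_ae_eq_coeFn_fourier_toLp hf₁ hf₂), ← Lp.enorm_def,
    ← Lp.enorm_toLp (f := f) hf₂]
  simp only [enorm_eq_nnnorm, ← norm_toNNReal, Lp.norm_fourier_eq]

end Plancherel

section Symbol

/-- The Fourier symbol `ξ ↦ ∫ |e^{2πi⟨z,ξ⟩} - 1|² |z|^{-d-2s} dz` of the Gagliardo energy. -/
def gagliardoSymbol (s : ℝ) (ξ : E) : ℝ≥0∞ :=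
  ∫⁻ z, ‖(𝐞 ⟪z, ξ⟫ : ℂ) - 1‖ₑ ^ 2 ∂stableLevyMeasure volume s

theorem measurable_enorm_fourierChar_sub_one_sq (ξ : E) :
    Measurable fun z : E ↦ ‖(𝐞 ⟪z, ξ⟫ : ℂ) - 1‖ₑ ^ 2 := by
  fun_prop

theorem measurePreserving_stableLevyMeasure (T : E ≃ₗᵢ[ℝ] E) :
    MeasurePreserving T (stableLevyMeasure volume s) (stableLevyMeasure volume s) := by
  refine ⟨T.continuous.measurable, Measure.ext_of_lintegral _ fun Φ hΦ ↦ ?_⟩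
  have hT := T.continuous.measurable
  rw [lintegral_map hΦ hT,
    lintegral_stableLevyMeasure volume (Φ := fun z ↦ Φ (T z)) (hΦ.comp hT).aemeasurable,
    lintegral_stableLevyMeasure volume hΦ.aemeasurable,
    ← T.measurePreserving.lintegral_comp (f := fun z ↦ ‖z‖ₑ ^ (-(finrank ℝ E + 2 * s)) * Φ z)
      (by fun_prop)]
  simp only [T.enorm_map]

theorem gagliardoSymbol_eq_of_norm_eq {ξ η : E} (h : ‖ξ‖ = ‖η‖) :
    gagliardoSymbol s ξ = gagliardoSymbol s η := by
  set T : E ≃ₗᵢ[ℝ] E := (ℝ ∙ (ξ - η))ᗮ.reflection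
  have hT : T ξ = η := Submodule.reflection_sub h
  rw [gagliardoSymbol, gagliardoSymbol,
    ← (measurePreserving_stableLevyMeasure T).lintegral_comp
      (measurable_enorm_fourierChar_sub_one_sq η)]
  simp only [← hT, T.inner_map_map]

theorem gagliardoSymbol_smul {r : ℝ} (hr : r ≠ 0) (ξ : E) :
    gagliardoSymbol s (r • ξ) = ‖r‖ₑ ^ (2 * s) * gagliardoSymbol s ξ := by
  rw [gagliardoSymbol, gagliardoSymbol, ← lintegral_comp_smul_stableLevyMeasure
    (measurable_enorm_fourierChar_sub_one_sq ξ) hr]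
  simp only [inner_smul_right, real_inner_smul_left]

theorem gagliardoSymbol_ne_top [Nontrivial E] (hs₀ : 0 < s) (hs₁ : s < 1) (ξ : E) :
    gagliardoSymbol s ξ ≠ ⊤ := by
  refine ((lintegral_mono fun z ↦ enorm_fourierChar_sub_one_sq_le z ξ).trans_lt ?_).ne
  rw [lintegral_const_mul' _ _ ENNReal.ofReal_ne_top]
  exact ENNReal.mul_lt_top ENNReal.ofReal_lt_top
    (lintegral_min_one_enorm_sq_stableLevyMeasure_lt_top hs₀ hs₁)

theorem gagliardoSymbol_ne_zero (hs : 0 < s) {ξ : E} (hξ : ξ ≠ 0) :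
    gagliardoSymbol s ξ ≠ 0 := by
  have := stableLevyMeasure_isOpenPosMeasure (volume : Measure E) hs
  have hcont : Continuous fun z : E ↦ ‖(𝐞 ⟪z, ξ⟫ : ℂ) - 1‖ₑ ^ 2 := by fun_prop
  refine ((lintegral_pos_iff_support hcont.measurable).mpr
    (hcont.isOpen_support.measure_pos _ ⟨(2 * ‖ξ‖ ^ 2)⁻¹ • ξ, ?_⟩)).ne'
  have hhalf : ⟪(2 * ‖ξ‖ ^ 2)⁻¹ • ξ, ξ⟫ = 1 / 2 := by
    rw [real_inner_smul_left, real_inner_self_eq_norm_sq]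
    field_simp [norm_ne_zero_iff.mpr hξ]
  rw [Function.mem_support, hhalf, Real.fourierChar_apply,
    show (2 * π * (1 / 2) : ℝ) = π by ring, Complex.exp_pi_mul_I]
  norm_num

theorem exists_gagliardoSymbol_eq [Nontrivial E] (hs₀ : 0 < s) (hs₁ : s < 1) :
    ∃ c : ℝ≥0∞, c ≠ 0 ∧ c ≠ ⊤ ∧ ∀ ξ : E, gagliardoSymbol s ξ = c * ‖ξ‖ₑ ^ (2 * s) := by
  obtain ⟨e, he⟩ := exists_norm_eq E zero_le_one
  have he₀ : e ≠ 0 := norm_pos_iff.mp (he ▸ one_pos)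
  refine ⟨gagliardoSymbol s e, gagliardoSymbol_ne_zero hs₀ he₀, gagliardoSymbol_ne_top hs₀ hs₁ e,
    fun ξ ↦ ?_⟩
  rcases eq_or_ne ξ 0 with rfl | hξ
  · simp [gagliardoSymbol, hs₀]
  · have hnorm : ‖ξ‖ = ‖‖ξ‖ • e‖ := by simp [norm_smul, he]
    rw [gagliardoSymbol_eq_of_norm_eq hnorm, gagliardoSymbol_smul (norm_ne_zero_iff.mpr hξ),
      enorm_norm, mul_comm]

end Symbol

section Energy

/-- The squared homogeneous Sobolev norm `‖f‖²_{Ḣ^σ}` with values in `[0, ∞]`; it is computed from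
the Fourier integral of `f`, hence meaningful for integrable `f` only. -/
def homSobolevEnergy [NormedSpace ℂ F] (σ : ℝ) (f : E → F) : ℝ≥0∞ :=
  ∫⁻ ξ, ‖ξ‖ₑ ^ (2 * σ) * ‖𝓕 f ξ‖ₑ ^ 2

theorem fourier_comp_add_right_sub [NormedSpace ℂ F] {f : E → F} (hf : Integrable f) (z ξ : E) :
    𝓕 (fun x ↦ f (x + z) - f x) ξ = ((𝐞 ⟪z, ξ⟫ : ℂ) - 1) • 𝓕 f ξ := by
  have hshift : 𝓕 (fun x ↦ f (x + z)) ξ = (𝐞 ⟪z, ξ⟫ : ℂ) • 𝓕 f ξ :=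
    congrFun (VectorFourier.fourierIntegral_comp_add_right 𝐞 volume (innerₗ E) f z) ξ
  have hadd := VectorFourier.fourierIntegral_add (L := innerₗ E) Real.continuous_fourierChar
    continuous_inner ((hf.comp_add_right z).sub hf) hf
  rw [sub_add_cancel] at hadd
  rw [sub_smul, one_smul, ← hshift]
  exact eq_sub_of_add_eq (congrFun hadd ξ).symm

variable [InnerProductSpace ℂ F] [CompleteSpace F]

theorem lintegral_enorm_add_sub_sq_eq_fourier {f : E → F} (hf₁ : Integrable f) (hf₂ : MemLp f 2)
    (z : E) : ∫⁻ x, ‖f (x + z) - f x‖ₑ ^ 2 =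
      ∫⁻ ξ, ‖(𝐞 ⟪z, ξ⟫ : ℂ) - 1‖ₑ ^ 2 * ‖𝓕 f ξ‖ₑ ^ 2 := by
  have hf₂z : MemLp (fun x ↦ f (x + z)) 2 :=
    hf₂.comp_measurePreserving (measurePreserving_add_right volume z)
  rw [← lintegral_enorm_fourier_sq (f := fun x ↦ f (x + z) - f x)
    ((hf₁.comp_add_right z).sub hf₁) (hf₂z.sub hf₂)]
  simp only [fourier_comp_add_right_sub hf₁, enorm_smul, mul_pow]

theorem exists_gagliardoEnergy_eq_homSobolevEnergy [Nontrivial E] (hs₀ : 0 < s) (hs₁ : s < 1) :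
    ∃ c : ℝ≥0∞, c ≠ 0 ∧ c ≠ ⊤ ∧ ∀ f : E → F, Integrable f → MemLp f 2 →
      gagliardoEnergy volume s f = c * homSobolevEnergy s f := by
  obtain ⟨c, hc₀, hc, hsymbol⟩ := exists_gagliardoSymbol_eq (E := E) hs₀ hs₁
  refine ⟨c, hc₀, hc, fun f hf₁ hf₂ ↦ ?_⟩
  have hcont := continuous_fourier_of_integrable hf₁
  have hchar : Continuous fun q : E × E ↦ (𝐞 ⟪q.1, q.2⟫ : ℂ) - 1 := by fun_prop
  calc gagliardoEnergy volume s f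
      = ∫⁻ z, ∫⁻ ξ, ‖(𝐞 ⟪z, ξ⟫ : ℂ) - 1‖ₑ ^ 2 * ‖𝓕 f ξ‖ₑ ^ 2 ∂volume
          ∂stableLevyMeasure volume s := by
        rw [gagliardoEnergy_eq_lintegral_symm hf₁.aestronglyMeasurable]
        simp only [lintegral_enorm_add_sub_sq_eq_fourier hf₁ hf₂]
    _ = ∫⁻ ξ, ∫⁻ z, ‖(𝐞 ⟪z, ξ⟫ : ℂ) - 1‖ₑ ^ 2 * ‖𝓕 f ξ‖ₑ ^ 2 ∂stableLevyMeasure volume s := by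
        refine lintegral_lintegral_swap (Measurable.aemeasurable ?_)
        exact (hchar.enorm.measurable.pow_const 2).mul
          ((hcont.comp continuous_snd).enorm.measurable.pow_const 2)
    _ = ∫⁻ ξ, c * (‖ξ‖ₑ ^ (2 * s) * ‖𝓕 f ξ‖ₑ ^ 2) := by
        refine lintegral_congr fun ξ ↦ ?_
        rw [lintegral_mul_const' _ _ (by finiteness), ← mul_assoc, ← hsymbol, gagliardoSymbol]
    _ = c * homSobolevEnergy s f := lintegral_const_mul' _ _ hc

theorem exists_homSobolevEnergy_smul_le [NormedField 𝕜] [NormedSpace 𝕜 F] (hs₀ : 0 < s)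
    (hs₁ : s < 1) (hd : 2 * s < finrank ℝ E) (A : ℝ≥0) :
    ∃ C : ℝ≥0, ∀ (m : E → 𝕜) (g : E → F), ScaledLipschitzWith A m → Integrable g → MemLp g 2 →
      homSobolevEnergy s (fun x ↦ m x • g x) ≤ C * homSobolevEnergy s g := by
  have : Nontrivial E := nontrivial_of_finrank_pos (R := ℝ) (by
    exact_mod_cast (by positivity : 0 < 2 * s).trans hd)
  obtain ⟨H, hH⟩ := exists_hardyEnergy_le (F := F) (μ := (volume : Measure E)) hs₀ hd
  obtain ⟨c, hc₀, hc, henergy⟩ :=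
    exists_gagliardoEnergy_eq_homSobolevEnergy (E := E) (F := F) hs₀ hs₁
  set K := ∫⁻ z : E, min 1 (‖z‖ₑ ^ 2) ∂stableLevyMeasure volume s
  have hK : K ≠ ⊤ := (lintegral_min_one_enorm_sq_stableLevyMeasure_lt_top hs₀ hs₁).ne
  have hC : 2 * (A : ℝ≥0∞) ^ 2 + 8 * A ^ 2 * K * H ≠ ⊤ := by finiteness
  refine ⟨(2 * A ^ 2 + 8 * A ^ 2 * K * H : ℝ≥0∞).toNNReal, fun m g hm hg₁ hg₂ ↦ ?_⟩
  rw [ENNReal.coe_toNNReal hC, ← ENNReal.mul_le_mul_iff_right hc₀ hc, mul_left_comm,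
    ← henergy _ (hm.integrable_smul hg₁) (hm.memLp_smul hg₂), ← henergy g hg₁ hg₂]
  calc gagliardoEnergy volume s (fun x ↦ m x • g x)
      ≤ 2 * A ^ 2 * gagliardoEnergy volume s g + 8 * A ^ 2 * K * hardyEnergy volume s g :=
        hm.gagliardoEnergy_smul_le hg₁.aestronglyMeasurable
    _ ≤ 2 * A ^ 2 * gagliardoEnergy volume s g +
          8 * A ^ 2 * K * (H * gagliardoEnergy volume s g) := by
        gcongr
        exact hH g hg₂
    _ = _ := by ring

theorem exists_sum_homSobolevEnergy_coord_div_norm_smul_le {ι : Type*} [Fintype ι] (hs₀ : 0 < s)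
    (hs₁ : s < 1) (hd : 2 * s < Fintype.card ι) :
    ∃ C : ℝ≥0, ∀ g : EuclideanSpace ℝ ι → F, Integrable g → MemLp g 2 →
      ∑ i, homSobolevEnergy s (fun x : EuclideanSpace ℝ ι ↦ ((x i / ‖x‖ : ℝ) : ℂ) • g x) ≤
        C * homSobolevEnergy s g := by
  obtain ⟨C, hC⟩ := exists_homSobolevEnergy_smul_le (E := EuclideanSpace ℝ ι) (F := F) (𝕜 := ℂ)
    hs₀ hs₁ (by simpa using hd) 2
  refine ⟨Fintype.card ι * C, fun g hg₁ hg₂ ↦ ?_⟩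
  refine (Finset.sum_le_card_nsmul _ _ _ fun i _ ↦
    hC _ g (scaledLipschitzWith_coord_div_norm i) hg₁ hg₂).trans_eq ?_
  simp [mul_assoc]

end Energy

section HomSobolev

variable {σ : ℝ} {f : E → F}

theorem integrable_norm_rpow_mul_schwartz_sq [NormedSpace ℝ F] (hσ : 0 ≤ σ) (φ : SchwartzMap E F) :
    Integrable fun x ↦ ‖x‖ ^ (2 * σ) * ‖φ x‖ ^ 2 := by
  set ψ := SchwartzMap.smulLeftCLM F (fun x : E ↦ (1 + ‖x‖ ^ 2) ^ (σ / 2)) φ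
  have hψ (x : E) : ‖ψ x‖ ^ 2 = (1 + ‖x‖ ^ 2) ^ σ * ‖φ x‖ ^ 2 := by
    rw [SchwartzMap.smulLeftCLM_apply_apply
      (Function.hasTemperateGrowth_one_add_norm_sq_rpow E (σ / 2)), norm_smul, mul_pow,
      Real.norm_of_nonneg (by positivity), ← Real.rpow_mul_natCast (by positivity)]
    norm_num
  have hmeas : AEStronglyMeasurable (fun x ↦ ‖x‖ ^ (2 * σ) * ‖φ x‖ ^ 2) volume :=
    (by fun_prop : Measurable fun x : E ↦ ‖x‖ ^ (2 * σ)).aestronglyMeasurable.mul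
      (φ.continuous.norm.pow 2).aestronglyMeasurable
  refine ((ψ.memLp 2).integrable_norm_pow two_ne_zero).mono' hmeas (ae_of_all _ fun x ↦ ?_)
  rw [Real.norm_of_nonneg (by positivity), hψ, Real.rpow_mul (norm_nonneg x), Real.rpow_two]
  gcongr
  linarith

variable [NormedSpace ℂ F]

theorem homSobolevEnergy_eq_lintegral_enorm (hσ : 0 ≤ σ) :
    homSobolevEnergy σ f = ∫⁻ ξ, ‖‖ξ‖ ^ (2 * σ) * ‖𝓕 f ξ‖ ^ 2‖ₑ := by
  simp only [homSobolevEnergy, enorm_mul, enorm_pow, enorm_norm,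
    Real.enorm_rpow_of_nonneg (norm_nonneg _) (by positivity : 0 ≤ 2 * σ)]

theorem aestronglyMeasurable_norm_rpow_mul_fourier_sq (hf : Integrable f) :
    AEStronglyMeasurable fun ξ ↦ ‖ξ‖ ^ (2 * σ) * ‖𝓕 f ξ‖ ^ 2 :=
  (by fun_prop : Measurable fun ξ : E ↦ ‖ξ‖ ^ (2 * σ)).aestronglyMeasurable.mul
    ((continuous_fourier_of_integrable hf).norm.pow 2).aestronglyMeasurable

theorem integrable_norm_rpow_mul_fourier_sq_iff (hf : Integrable f) (hσ : 0 ≤ σ) :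
    Integrable (fun ξ ↦ ‖ξ‖ ^ (2 * σ) * ‖𝓕 f ξ‖ ^ 2) ↔ homSobolevEnergy σ f ≠ ⊤ := by
  rw [Integrable, and_iff_right (aestronglyMeasurable_norm_rpow_mul_fourier_sq hf),
    HasFiniteIntegral, homSobolevEnergy_eq_lintegral_enorm hσ, lt_top_iff_ne_top]

theorem toReal_homSobolevEnergy (hf : Integrable f) (hσ : 0 ≤ σ) :
    (homSobolevEnergy σ f).toReal = ∫ ξ, ‖ξ‖ ^ (2 * σ) * ‖𝓕 f ξ‖ ^ 2 := by
  rw [homSobolevEnergy_eq_lintegral_enorm hσ, ← integral_norm_eq_lintegral_enorm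
    (aestronglyMeasurable_norm_rpow_mul_fourier_sq hf)]
  exact integral_congr_ae (ae_of_all _ fun ξ ↦ Real.norm_of_nonneg (by positivity))

end HomSobolev

end Fourier

theorem unit_vector_multiplier_Hhalf_general {ι : Type*} [Fintype ι] [NormedAddCommGroup F]
    [InnerProductSpace ℂ F] [CompleteSpace F] (hs₀ : 0 < s) (hs₁ : s < 1)
    (hd : 2 * s < Fintype.card ι) :
    ∃ C > (0 : ℝ), ∀ g : EuclideanSpace ℝ ι → F, Integrable g → MemLp g 2 →
      Integrable (fun ξ ↦ ‖ξ‖ ^ (2 * s) * ‖𝓕 g ξ‖ ^ 2) →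
        √(∑ i, ∫ ξ, ‖ξ‖ ^ (2 * s) * ‖𝓕 (fun x ↦ ((x i / ‖x‖ : ℝ) : ℂ) • g x) ξ‖ ^ 2) ≤
          C * √(∫ ξ, ‖ξ‖ ^ (2 * s) * ‖𝓕 g ξ‖ ^ 2) := by
  obtain ⟨C, hC⟩ := exists_sum_homSobolevEnergy_coord_div_norm_smul_le (F := F) hs₀ hs₁ hd
  refine ⟨√(C + 1), by positivity, fun g hg₁ hg₂ hg ↦ ?_⟩
  have : Nontrivial (EuclideanSpace ℝ ι) := nontrivial_of_finrank_pos (R := ℝ) (by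
    simpa using (by positivity : 0 < 2 * s).trans hd)
  have hh (i : ι) := (scaledLipschitzWith_coord_div_norm i).integrable_smul hg₁
  have hsum : ∑ i, homSobolevEnergy s (fun x : EuclideanSpace ℝ ι ↦ ((x i / ‖x‖ : ℝ) : ℂ) • g x) ≤
      (C + 1 : ℝ≥0) * homSobolevEnergy s g := (hC g hg₁ hg₂).trans (by gcongr; simp)
  have hfin : (C + 1 : ℝ≥0) * homSobolevEnergy s g ≠ ⊤ :=
    ENNReal.mul_ne_top ENNReal.coe_ne_top
      ((integrable_norm_rpow_mul_fourier_sq_iff hg₁ hs₀.le).mp hg)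
  have hreal := ENNReal.toReal_mono hfin hsum
  rw [ENNReal.toReal_sum (ENNReal.sum_ne_top.mp (ne_top_of_le_ne_top hfin hsum)),
    ENNReal.toReal_mul, ENNReal.coe_toReal, toReal_homSobolevEnergy hg₁ hs₀.le] at hreal
  simp_rw [toReal_homSobolevEnergy (hh _) hs₀.le] at hreal
  rw [← Real.sqrt_mul (by positivity)]
  exact Real.sqrt_le_sqrt (by exact_mod_cast hreal)

/-- There is `C > 0` so that for every Schwartz `g : ℝ³ → ℂ`, the
vector-valued function `h(x) = (x/|x|) g(x)` satisfies `‖h‖_{Ḣ^{1/2}} ≤ C ‖g‖_{Ḣ^{1/2}}`,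
where the `Ḣ^{1/2}` norm of `h` is summed over its three components. -/
theorem unit_vector_multiplier_Hhalf :
    ∃ C > (0:ℝ), ∀ g : SchwartzMap E3 ℂ,
      Real.sqrt (∑ i : Fin 3, sobSq (1/2) (fun x : E3 => ((x i / ‖x‖ : ℝ) : ℂ) * g x))
        ≤ C * Real.sqrt (sobSq (1/2) (fun x => g x)) := by
  obtain ⟨C, hC, h⟩ := unit_vector_multiplier_Hhalf_general (ι := Fin 3) (F := ℂ) (s := 1 / 2)
    (by norm_num) (by norm_num) (by norm_num)
  exact ⟨C, hC, fun g ↦ h g g.integrable (g.memLp 2)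
    (integrable_norm_rpow_mul_schwartz_sq (by norm_num) (𝓕 g))⟩
end
end

section
/- There is a constant C > 0 such that for every smooth compactly supported function g : ℝ³ → ℂ whose support does not contain the origin, the ℝ³-vector-valued function h(x) = (x/|x|) g(x) satisfies ‖∇h‖_{L²(ℝ³)} ≤ C ‖∇g‖_{L²(ℝ³)}, where ∇h denotes the full matrix of first partial derivatives (with the Euclidean/Frobenius norm) and ∇g the gradient of g. -/
open MeasureTheory Real Complex Filter
open scoped FourierTransform ContDiff ENNReal

noncomputable section

/-!
For `h = (x / |x|) g` the product rule splits `∇h` into a radial part, carrying `∇g`, and a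
tangential part, carrying the derivative of `x / |x|`, which is `|x|⁻¹` times the orthogonal
projection onto `xᗮ`. The two parts are orthogonal, so in dimension `d`
`|∇h|² = |∇g|² + (d - 1) |g|² / |x|²` away from the origin. Hardy's inequality bounds the last
term in `L¹` by `(d - 1) (2 / (d - 2))² ‖∇g‖²`, and `1 + 4 (d - 1) / (d - 2)² = (d / (d - 2))²`.

Hardy's inequality comes from integrating the Euler field `x ↦ x`, of divergence `d`, against the
regularised weight `|g|² / (|x|² + ε)`, completing the square, and letting `ε → 0` with Fatou.
-/

open Module Submodule Topology
open scoped RealInnerProductSpace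

section Fatou

theorem integrable_and_integral_le_of_tendsto {α κ : Type*} [MeasurableSpace α] {μ : Measure α}
    {l : Filter κ} [l.NeBot] [l.IsCountablyGenerated] {f : κ → α → ℝ} {f₀ : α → ℝ} {B : ℝ}
    (hf : ∀ k, Integrable (f k) μ) (hf_nonneg : ∀ k, 0 ≤ᵐ[μ] f k) (hB : ∀ k, ∫ x, f k x ∂μ ≤ B)
    (hlim : ∀ᵐ x ∂μ, Tendsto (fun k => f k x) l (𝓝 (f₀ x))) :
    Integrable f₀ μ ∧ ∫ x, f₀ x ∂μ ≤ B := by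
  have hf₀_meas : AEStronglyMeasurable f₀ μ :=
    aestronglyMeasurable_of_tendsto_ae l (fun k => (hf k).aestronglyMeasurable) hlim
  have hbound (k : κ) : ∫⁻ x, ‖f k x‖ₑ ∂μ ≤ ENNReal.ofReal B := by
    rw [← ofReal_integral_norm_eq_lintegral_enorm (hf k)]
    refine ENNReal.ofReal_le_ofReal (le_of_eq_of_le (integral_congr_ae ?_) (hB k))
    filter_upwards [hf_nonneg k] with x hx using Real.norm_of_nonneg hx
  have hfatou : ∫⁻ x, ‖f₀ x‖ₑ ∂μ ≤ ENNReal.ofReal B := calc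
    ∫⁻ x, ‖f₀ x‖ₑ ∂μ = ∫⁻ x, liminf (fun k => ‖f k x‖ₑ) l ∂μ :=
      lintegral_congr_ae (by filter_upwards [hlim] with x hx using hx.enorm.liminf_eq.symm)
    _ ≤ liminf (fun k => ∫⁻ x, ‖f k x‖ₑ ∂μ) l :=
      lintegral_liminf_le' fun k => (hf k).aestronglyMeasurable.enorm
    _ ≤ ENNReal.ofReal B := liminf_le_of_le (h := fun b hb => by
      obtain ⟨k, hk⟩ := hb.exists
      exact hk.trans (hbound k))
  have hf₀ : Integrable f₀ μ := ⟨hf₀_meas, hfatou.trans_lt ENNReal.ofReal_lt_top⟩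
  have hB_nonneg : 0 ≤ B := by
    obtain ⟨k⟩ := l.nonempty_of_neBot
    exact (integral_nonneg_of_ae (hf_nonneg k)).trans (hB k)
  refine ⟨hf₀, (integral_mono hf₀ hf₀.norm fun x => Real.le_norm_self _).trans ?_⟩
  rwa [← ENNReal.ofReal_le_ofReal_iff hB_nonneg, ofReal_integral_norm_eq_lintegral_enorm hf₀]

end Fatou

section EulerField

variable {E G : Type*} [NormedAddCommGroup E] [NormedSpace ℝ E] [FiniteDimensional ℝ E]
  [MeasurableSpace E] [BorelSpace E] (μ : Measure E) [μ.IsAddHaarMeasure]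
  [NormedAddCommGroup G] [NormedSpace ℝ G]

theorem integral_fderiv_apply_self {φ : E → G} (hφ : ContDiff ℝ 1 φ) (hc : HasCompactSupport φ) :
    ∫ x, fderiv ℝ φ x x ∂μ = -((finrank ℝ E : ℝ) • ∫ x, φ x ∂μ) := by
  let b := finBasis ℝ E
  let coord (i) : E →L[ℝ] ℝ := (b.coord i).toContinuousLinearMap
  have hDφ : Continuous (fderiv ℝ φ) := hφ.continuous_fderiv one_ne_zero
  have h_int (i) : Integrable (fun x => coord i x • fderiv ℝ φ x (b i)) μ :=
    ((coord i).continuous.smul (hDφ.clm_apply continuous_const)).integrable_of_hasCompactSupport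
      (hc.fderiv_apply (𝕜 := ℝ) (b i)).smul_left
  have hφ_int : Integrable φ μ := hφ.continuous.integrable_of_hasCompactSupport hc
  have hparts (i) : ∫ x, coord i x • fderiv ℝ φ x (b i) ∂μ = -∫ x, φ x ∂μ := by
    have hcoord (x : E) : fderiv ℝ (coord i) x (b i) = 1 := by
      rw [(coord i).fderiv]
      simp [coord]
    have hcoord_smul : Integrable (fun x => coord i x • φ x) μ :=
      ((coord i).continuous.smul hφ.continuous).integrable_of_hasCompactSupport hc.smul_left
    rw [integral_smul_fderiv_eq_neg_fderiv_smul_of_integrable (by simpa only [hcoord, one_smul])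
      (h_int i) hcoord_smul (fun x _ => (coord i).differentiableAt)
      (fun x _ => hφ.differentiable one_ne_zero x)]
    simp only [hcoord, one_smul]
  have hexpand (x : E) : fderiv ℝ φ x x = ∑ i, coord i x • fderiv ℝ φ x (b i) := by
    conv_lhs => rw [← b.sum_repr x, map_sum]
    simp [coord, b.sum_repr]
  simp only [hexpand]
  rw [integral_finsetSum _ fun i _ => h_int i]
  simp only [hparts, Finset.sum_const, Finset.card_univ, Fintype.card_fin, smul_neg,
    Nat.cast_smul_eq_nsmul]

end EulerField

section Frobenius

variable {E F ι : Type*} [NormedAddCommGroup E] [InnerProductSpace ℝ E] [Fintype ι]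
  (b : OrthonormalBasis ι ℝ E)

/-- The squared Frobenius (Hilbert–Schmidt) norm of a linear map, computed in the orthonormal
basis `b`; for `L = fderiv ℝ g x` it is the sum of the squares of the partial derivatives of `g`
at `x`. -/
def frobeniusNormSq [SeminormedAddCommGroup F] [NormedSpace ℝ F] (L : E →L[ℝ] F) : ℝ :=
  ∑ j, ‖L (b j)‖ ^ 2

theorem frobeniusNormSq_nonneg [SeminormedAddCommGroup F] [NormedSpace ℝ F] (L : E →L[ℝ] F) :
    0 ≤ frobeniusNormSq b L :=
  Finset.sum_nonneg fun _ _ => sq_nonneg _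

theorem frobeniusNormSq_zero [SeminormedAddCommGroup F] [NormedSpace ℝ F] :
    frobeniusNormSq b (0 : E →L[ℝ] F) = 0 := by
  simp [frobeniusNormSq]

theorem continuous_frobeniusNormSq [SeminormedAddCommGroup F] [NormedSpace ℝ F] :
    Continuous (frobeniusNormSq b : (E →L[ℝ] F) → ℝ) := by
  unfold frobeniusNormSq
  fun_prop

theorem opNorm_sq_le_frobeniusNormSq [SeminormedAddCommGroup F] [NormedSpace ℝ F]
    (L : E →L[ℝ] F) : ‖L‖ ^ 2 ≤ frobeniusNormSq b L := by
  have hbound (v : E) : ‖L v‖ ≤ √(frobeniusNormSq b L) * ‖v‖ := by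
    refine abs_le_of_sq_le_sq' ?_ (by positivity) |>.2
    calc ‖L v‖ ^ 2 = ‖∑ j, ⟪b j, v⟫ • L (b j)‖ ^ 2 := by
          simp only [← map_smul, ← map_sum, b.sum_repr']
      _ ≤ (∑ j, ‖⟪b j, v⟫‖ * ‖L (b j)‖) ^ 2 := by
          gcongr
          exact norm_sum_le_of_le _ fun j _ => norm_smul_le _ _
      _ ≤ (∑ j, ‖⟪b j, v⟫‖ ^ 2) * ∑ j, ‖L (b j)‖ ^ 2 := Finset.sum_mul_sq_le_sq_mul_sq ..
      _ = (√(frobeniusNormSq b L) * ‖v‖) ^ 2 := by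
          rw [b.sum_sq_norm_inner_right, mul_pow, Real.sq_sqrt (frobeniusNormSq_nonneg b L),
            mul_comm, frobeniusNormSq]
  calc ‖L‖ ^ 2 ≤ √(frobeniusNormSq b L) ^ 2 := by
        gcongr
        exact L.opNorm_le_bound (Real.sqrt_nonneg _) hbound
    _ = frobeniusNormSq b L := Real.sq_sqrt (frobeniusNormSq_nonneg b L)

variable [NormedAddCommGroup F] [InnerProductSpace ℝ F]

-- The left-hand side is the squared norm of the tensor `u ⊗ p + w ⊗ q`.
theorem sum_norm_sq_inner_smul_add_inner_smul (u w : E) (p q : F) :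
    ∑ i, ‖⟪b i, u⟫ • p + ⟪b i, w⟫ • q‖ ^ 2 =
      ‖u‖ ^ 2 * ‖p‖ ^ 2 + 2 * ⟪u, w⟫ * ⟪p, q⟫ + ‖w‖ ^ 2 * ‖q‖ ^ 2 := by
  have hterm (i : ι) : ‖⟪b i, u⟫ • p + ⟪b i, w⟫ • q‖ ^ 2 =
      ⟪b i, u⟫ ^ 2 * ‖p‖ ^ 2 + ⟪u, b i⟫ * ⟪b i, w⟫ * (2 * ⟪p, q⟫) + ⟪b i, w⟫ ^ 2 * ‖q‖ ^ 2 := by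
    rw [norm_add_sq_real, norm_smul, norm_smul, mul_pow, mul_pow, real_inner_smul_left,
      real_inner_smul_right, Real.norm_eq_abs, Real.norm_eq_abs, sq_abs, sq_abs,
      real_inner_comm u]
    ring
  simp only [hterm, Finset.sum_add_distrib, ← Finset.sum_mul, b.sum_sq_inner_right,
    b.sum_inner_mul_inner]
  ring

theorem starProjection_orthogonal_singleton_apply {x : E} (hx : x ≠ 0) (v : E) :
    (ℝ ∙ x)ᗮ.starProjection v = v - ⟪NormedSpace.normalize x, v⟫ • NormedSpace.normalize x := by
  have hnorm : ‖x‖ ≠ 0 := norm_ne_zero_iff.mpr hx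
  rw [starProjection_orthogonal_val, starProjection_singleton]
  simp only [NormedSpace.normalize, real_inner_smul_left, smul_smul, RCLike.ofReal_real_eq_id,
    id_eq]
  congr 2
  field_simp

theorem frobeniusNormSq_starProjection_orthogonal_singleton {x : E} (hx : x ≠ 0) :
    frobeniusNormSq b (ℝ ∙ x)ᗮ.starProjection = finrank ℝ E - 1 := by
  have hn : ‖NormedSpace.normalize x‖ = 1 := NormedSpace.norm_normalize hx
  have hterm (j : ι) :
      ‖(ℝ ∙ x)ᗮ.starProjection (b j)‖ ^ 2 = 1 - ⟪NormedSpace.normalize x, b j⟫ ^ 2 := by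
    rw [starProjection_orthogonal_singleton_apply hx, norm_sub_sq_real, norm_smul, hn,
      b.norm_eq_one, real_inner_smul_right, real_inner_comm, mul_one, Real.norm_eq_abs, sq_abs]
    ring
  simp only [frobeniusNormSq, hterm, Finset.sum_sub_distrib, b.sum_sq_inner_left, hn]
  simp [finrank_eq_card_basis b.toBasis]

end Frobenius

section UnitVectorField

variable {E F ι : Type*} [NormedAddCommGroup E] [InnerProductSpace ℝ E]

theorem hasFDerivAt_norm {x : E} (hx : x ≠ 0) :
    HasFDerivAt (fun z : E => ‖z‖) (innerSL ℝ (NormedSpace.normalize x)) x := by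
  have hnorm : ‖x‖ ≠ 0 := norm_ne_zero_iff.mpr hx
  have h := (hasStrictFDerivAt_norm_sq x).hasFDerivAt.sqrt (pow_ne_zero 2 hnorm)
  simp only [Real.sqrt_sq (norm_nonneg _)] at h
  convert! h using 1
  ext v
  simp only [innerSL_apply_apply, NormedSpace.normalize, real_inner_smul_left,
    _root_.smul_apply, smul_eq_mul, nsmul_eq_mul, Nat.cast_ofNat]
  field_simp

theorem hasFDerivAt_normalize {x : E} (hx : x ≠ 0) :
    HasFDerivAt NormedSpace.normalize (‖x‖⁻¹ • (ℝ ∙ x)ᗮ.starProjection) x := by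
  have hnorm : ‖x‖ ≠ 0 := norm_ne_zero_iff.mpr hx
  have h := ((hasDerivAt_inv hnorm).comp_hasFDerivAt x (hasFDerivAt_norm hx)).fun_smul
    (hasFDerivAt_id x)
  convert! h using 1
  ext v
  rw [_root_.smul_apply, starProjection_orthogonal_singleton_apply hx]
  simp only [NormedSpace.normalize, real_inner_smul_left, Function.comp_apply, neg_smul, id_eq,
    _root_.add_apply, _root_.smul_apply, ContinuousLinearMap.id_apply,
    ContinuousLinearMap.smulRight_apply, _root_.neg_apply, coe_innerSL_apply, smul_eq_mul]
  module

variable [Fintype ι] (b : OrthonormalBasis ι ℝ E) [NormedAddCommGroup F] [InnerProductSpace ℝ F]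

theorem fderiv_inner_normalize_smul_apply (w : E) {g : E → F} {x : E} (hx : x ≠ 0)
    (hg : DifferentiableAt ℝ g x) (v : E) :
    fderiv ℝ (fun z => ⟪w, NormedSpace.normalize z⟫ • g z) x v =
      ⟪w, NormedSpace.normalize x⟫ • fderiv ℝ g x v +
        ⟪w, ‖x‖⁻¹ • (ℝ ∙ x)ᗮ.starProjection v⟫ • g x := by
  have hcoord : HasFDerivAt (fun z => ⟪w, NormedSpace.normalize z⟫)
      ((innerSL ℝ w).comp (‖x‖⁻¹ • (ℝ ∙ x)ᗮ.starProjection)) x :=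
    (innerSL ℝ w).hasFDerivAt.comp x (hasFDerivAt_normalize hx)
  rw [(hcoord.fun_smul hg.hasFDerivAt).fderiv]
  rfl

theorem sum_frobeniusNormSq_fderiv_inner_normalize_smul {g : E → F} {x : E} (hx : x ≠ 0)
    (hg : DifferentiableAt ℝ g x) :
    ∑ i, frobeniusNormSq b (fderiv ℝ (fun z => ⟪b i, NormedSpace.normalize z⟫ • g z) x) =
      frobeniusNormSq b (fderiv ℝ g x) + (finrank ℝ E - 1) * (‖g x‖ ^ 2 / ‖x‖ ^ 2) := by
  have horth (v : E) : ⟪NormedSpace.normalize x, (ℝ ∙ x)ᗮ.starProjection v⟫ = 0 :=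
    inner_right_of_mem_orthogonal (smul_mem _ _ (mem_span_singleton_self x))
      (starProjection_apply_mem _ v)
  calc ∑ i, frobeniusNormSq b (fderiv ℝ (fun z => ⟪b i, NormedSpace.normalize z⟫ • g z) x)
      = ∑ j, ∑ i, ‖⟪b i, NormedSpace.normalize x⟫ • fderiv ℝ g x (b j) +
          ⟪b i, ‖x‖⁻¹ • (ℝ ∙ x)ᗮ.starProjection (b j)⟫ • g x‖ ^ 2 := by
        simp only [frobeniusNormSq, fderiv_inner_normalize_smul_apply _ hx hg]
        exact Finset.sum_comm
    _ = ∑ j, (‖fderiv ℝ g x (b j)‖ ^ 2 +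
          ‖(ℝ ∙ x)ᗮ.starProjection (b j)‖ ^ 2 * (‖g x‖ ^ 2 / ‖x‖ ^ 2)) := by
        refine Finset.sum_congr rfl fun j _ => ?_
        rw [sum_norm_sq_inner_smul_add_inner_smul, NormedSpace.norm_normalize hx,
          real_inner_smul_right, horth, norm_smul, norm_inv, norm_norm]
        ring
    _ = frobeniusNormSq b (fderiv ℝ g x) + (finrank ℝ E - 1) * (‖g x‖ ^ 2 / ‖x‖ ^ 2) := by
        rw [Finset.sum_add_distrib, ← Finset.sum_mul,
          ← frobeniusNormSq_starProjection_orthogonal_singleton b hx]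
        rfl

end UnitVectorField
section CompactSupport

variable {E F : Type*} [NormedAddCommGroup E] [NormedSpace ℝ E] [MeasurableSpace E]
  [OpensMeasurableSpace E] (μ : Measure E) [IsFiniteMeasureOnCompacts μ] [NormedAddCommGroup F]
  [NormedSpace ℝ F] {g : E → F}

theorem integrable_comp_fderiv {H : Type*} [NormedAddCommGroup H] {Φ : (E →L[ℝ] F) → H}
    (hΦ : Continuous Φ) (hΦ_zero : Φ 0 = 0) (hg : ContDiff ℝ 1 g) (hc : HasCompactSupport g) :
    Integrable (fun x => Φ (fderiv ℝ g x)) μ :=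
  (hΦ.comp (hg.continuous_fderiv one_ne_zero)).integrable_of_hasCompactSupport
    ((hc.fderiv ℝ).comp_left hΦ_zero)

theorem integrable_norm_sq_fderiv (hg : ContDiff ℝ 1 g) (hc : HasCompactSupport g) :
    Integrable (fun x => ‖fderiv ℝ g x‖ ^ 2) μ :=
  integrable_comp_fderiv μ (Φ := fun L => ‖L‖ ^ 2) (by fun_prop) (by simp) hg hc

end CompactSupport

section IntegrableFrobenius

variable {E F ι : Type*} [NormedAddCommGroup E] [InnerProductSpace ℝ E] [MeasurableSpace E]
  [OpensMeasurableSpace E] (μ : Measure E) [IsFiniteMeasureOnCompacts μ] [NormedAddCommGroup F]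
  [NormedSpace ℝ F] [Fintype ι] (b : OrthonormalBasis ι ℝ E) {g : E → F}

theorem integrable_frobeniusNormSq_fderiv (hg : ContDiff ℝ 1 g) (hc : HasCompactSupport g) :
    Integrable (fun x => frobeniusNormSq b (fderiv ℝ g x)) μ :=
  integrable_comp_fderiv μ (continuous_frobeniusNormSq b) (frobeniusNormSq_zero b) hg hc

theorem integral_norm_sq_fderiv_le_integral_frobeniusNormSq (hg : ContDiff ℝ 1 g)
    (hc : HasCompactSupport g) :
    ∫ x, ‖fderiv ℝ g x‖ ^ 2 ∂μ ≤ ∫ x, frobeniusNormSq b (fderiv ℝ g x) ∂μ :=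
  integral_mono (integrable_norm_sq_fderiv μ hg hc) (integrable_frobeniusNormSq_fderiv μ b hg hc)
    fun _ => opNorm_sq_le_frobeniusNormSq b _

end IntegrableFrobenius

section HardyWeight

variable {E F : Type*} [NormedAddCommGroup E] [NormedAddCommGroup F] {ε : ℝ}

/-- The weight `‖g x‖² / ‖x‖²` of Hardy's inequality, regularised at the origin by a parameter
`ε > 0`. For `ε = 0` it is the unregularised weight, with junk value `0` at the origin. -/
def hardyWeight (ε : ℝ) (g : E → F) (x : E) : ℝ :=
  ‖g x‖ ^ 2 / (‖x‖ ^ 2 + ε)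

theorem hardyWeight_zero (g : E → F) (x : E) : hardyWeight 0 g x = ‖g x‖ ^ 2 / ‖x‖ ^ 2 := by
  rw [hardyWeight, add_zero]

theorem hardyWeight_nonneg (hε : 0 ≤ ε) (g : E → F) (x : E) : 0 ≤ hardyWeight ε g x := by
  unfold hardyWeight
  positivity

theorem continuous_hardyWeight (hε : 0 < ε) {g : E → F} (hg : Continuous g) :
    Continuous (hardyWeight ε g) :=
  (hg.norm.pow 2).div ((continuous_norm.pow 2).add continuous_const) fun x => by positivity

theorem hasCompactSupport_hardyWeight (ε : ℝ) {g : E → F} (hc : HasCompactSupport g) :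
    HasCompactSupport (hardyWeight ε g) :=
  hc.mono fun x hx hgx => hx (by simp [hardyWeight, hgx])

theorem integrable_hardyWeight_of_pos [MeasurableSpace E] [OpensMeasurableSpace E] (μ : Measure E)
    [IsFiniteMeasureOnCompacts μ] (hε : 0 < ε) {g : E → F} (hg : Continuous g)
    (hc : HasCompactSupport g) : Integrable (hardyWeight ε g) μ :=
  (continuous_hardyWeight hε hg).integrable_of_hasCompactSupport
    (hasCompactSupport_hardyWeight ε hc)

theorem tendsto_hardyWeight (g : E → F) {x : E} (hx : x ≠ 0) :
    Tendsto (fun ε => hardyWeight ε g x) (𝓝 0) (𝓝 (hardyWeight 0 g x)) :=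
  tendsto_const_nhds.div (tendsto_const_nhds.add tendsto_id) (by simpa using hx)

end HardyWeight

section Hardy

variable {E F : Type*} [NormedAddCommGroup E] [InnerProductSpace ℝ E]
  [NormedAddCommGroup F] [InnerProductSpace ℝ F] {g : E → F} {ε : ℝ}

theorem contDiff_hardyWeight (hε : 0 < ε) {n : WithTop ℕ∞} (hg : ContDiff ℝ n g) :
    ContDiff ℝ n (hardyWeight ε g) :=
  (hg.norm_sq ℝ).div ((contDiff_norm_sq ℝ).add contDiff_const) fun x => by positivity

theorem fderiv_hardyWeight_apply_self (hε : 0 < ε) {x : E} (hg : DifferentiableAt ℝ g x) :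
    fderiv ℝ (hardyWeight ε g) x x =
      2 * (⟪g x, fderiv ℝ g x x⟫ / (‖x‖ ^ 2 + ε)) -
        2 * (‖x‖ * ‖g x‖ / (‖x‖ ^ 2 + ε)) ^ 2 := by
  have hq : ‖x‖ ^ 2 + ε ≠ 0 := by positivity
  have hden : HasFDerivAt (fun z : E => ‖z‖ ^ 2 + ε) (2 • innerSL ℝ x) x :=
    (hasStrictFDerivAt_norm_sq x).hasFDerivAt.add_const ε
  have h := hg.hasFDerivAt.norm_sq.fun_mul ((hasDerivAt_inv hq).comp_hasFDerivAt x hden)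
  have hφ : hardyWeight ε g = fun z => ‖g z‖ ^ 2 * (‖z‖ ^ 2 + ε)⁻¹ :=
    funext fun z => div_eq_mul_inv _ _
  simp only [Function.comp_apply] at h
  rw [hφ, h.fderiv]
  simp only [_root_.add_apply, _root_.smul_apply, neg_smul, smul_neg, _root_.neg_apply,
    coe_innerSL_apply, real_inner_self_eq_norm_sq, nsmul_eq_mul, Nat.cast_ofNat, smul_eq_mul,
    ContinuousLinearMap.comp_apply]
  field_simp
  ring

-- Cauchy–Schwarz, then `2 a s D ≤ a² s² + D²` with `s = ‖x‖ ‖g x‖ / (‖x‖² + ε)`.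
theorem neg_mul_fderiv_hardyWeight_apply_self_le (hε : 0 < ε) {x : E}
    (hg : DifferentiableAt ℝ g x) {a : ℝ} (ha : 0 ≤ a) :
    -(a * fderiv ℝ (hardyWeight ε g) x x) ≤
      (a ^ 2 + 2 * a) * hardyWeight ε g x + ‖fderiv ℝ g x‖ ^ 2 := by
  have hq : 0 < ‖x‖ ^ 2 + ε := by positivity
  have hinner : -⟪g x, fderiv ℝ g x x⟫ ≤ ‖g x‖ * (‖fderiv ℝ g x‖ * ‖x‖) := calc
    -⟪g x, fderiv ℝ g x x⟫ ≤ ‖g x‖ * ‖fderiv ℝ g x x‖ :=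
      (neg_le_abs _).trans (abs_real_inner_le_norm _ _)
    _ ≤ ‖g x‖ * (‖fderiv ℝ g x‖ * ‖x‖) := by
      gcongr
      exact (fderiv ℝ g x).le_opNorm x
  rw [fderiv_hardyWeight_apply_self hε hg]
  set s := ‖x‖ * ‖g x‖ / (‖x‖ ^ 2 + ε) with hs
  have hs_sq : s ^ 2 ≤ hardyWeight ε g x := calc
    s ^ 2 = ‖x‖ ^ 2 / (‖x‖ ^ 2 + ε) * hardyWeight ε g x := by
      rw [hs, hardyWeight]
      field_simp
    _ ≤ hardyWeight ε g x :=
      mul_le_of_le_one_left (hardyWeight_nonneg hε.le g x)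
        ((div_le_one hq).mpr (le_add_of_nonneg_right hε.le))
  have hradial : -(⟪g x, fderiv ℝ g x x⟫ / (‖x‖ ^ 2 + ε)) ≤ s * ‖fderiv ℝ g x‖ := calc
    -(⟪g x, fderiv ℝ g x x⟫ / (‖x‖ ^ 2 + ε))
        ≤ ‖g x‖ * (‖fderiv ℝ g x‖ * ‖x‖) / (‖x‖ ^ 2 + ε) := by
      rw [← neg_div]
      gcongr
    _ = s * ‖fderiv ℝ g x‖ := by ring
  calc -(a * (2 * (⟪g x, fderiv ℝ g x x⟫ / (‖x‖ ^ 2 + ε)) - 2 * s ^ 2))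
      = 2 * a * -(⟪g x, fderiv ℝ g x x⟫ / (‖x‖ ^ 2 + ε)) + 2 * a * s ^ 2 := by ring
    _ ≤ 2 * a * (s * ‖fderiv ℝ g x‖) + 2 * a * s ^ 2 := by gcongr
    _ ≤ (a ^ 2 + 2 * a) * s ^ 2 + ‖fderiv ℝ g x‖ ^ 2 := by
      linear_combination sq_nonneg (a * s - ‖fderiv ℝ g x‖)
    _ ≤ (a ^ 2 + 2 * a) * hardyWeight ε g x + ‖fderiv ℝ g x‖ ^ 2 := by gcongr

variable [MeasurableSpace E] [BorelSpace E] (μ : Measure E) [μ.IsAddHaarMeasure]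

theorem integral_hardyWeight_le_of_pos (hE : 2 < finrank ℝ E) (hg : ContDiff ℝ 1 g)
    (hc : HasCompactSupport g) (hε : 0 < ε) :
    ((finrank ℝ E - 2) / 2 : ℝ) ^ 2 * ∫ x, hardyWeight ε g x ∂μ ≤
      ∫ x, ‖fderiv ℝ g x‖ ^ 2 ∂μ := by
  have : FiniteDimensional ℝ E := finite_of_finrank_pos (by lia)
  set a : ℝ := (finrank ℝ E - 2) / 2 with ha
  have ha_nonneg : 0 ≤ a := by
    have : (2 : ℝ) < finrank ℝ E := by exact_mod_cast hE
    linarith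
  have hφ : ContDiff ℝ 1 (hardyWeight ε g) := contDiff_hardyWeight hε hg
  have hφc : HasCompactSupport (hardyWeight ε g) := hasCompactSupport_hardyWeight ε hc
  have hφ_int := integrable_hardyWeight_of_pos μ hε hg.continuous hc
  have hDg_int := integrable_norm_sq_fderiv μ hg hc
  have hDφ_int : Integrable (fun x => fderiv ℝ (hardyWeight ε g) x x) μ :=
    ((hφ.continuous_fderiv one_ne_zero).clm_apply continuous_id).integrable_of_hasCompactSupport
      ((hφc.fderiv ℝ).mono fun x hx h => hx (by simp [h]))
  have hmono := integral_mono (hDφ_int.const_mul a).neg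
    ((hφ_int.const_mul (a ^ 2 + 2 * a)).add hDg_int) fun x =>
      neg_mul_fderiv_hardyWeight_apply_self_le hε (hg.differentiable one_ne_zero x) ha_nonneg
  simp only [Pi.neg_apply, Pi.add_apply] at hmono
  rw [integral_neg, integral_const_mul, integral_fderiv_apply_self μ hφ hφc,
    integral_add (hφ_int.const_mul _) hDg_int, integral_const_mul, smul_eq_mul,
    show (finrank ℝ E : ℝ) = 2 * a + 2 by rw [ha]; ring] at hmono
  linear_combination hmono

theorem hardy_inequality_s5 (hE : 2 < finrank ℝ E) (hg : ContDiff ℝ 1 g)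
    (hc : HasCompactSupport g) :
    Integrable (fun x => ‖g x‖ ^ 2 / ‖x‖ ^ 2) μ ∧
      ∫ x, ‖g x‖ ^ 2 / ‖x‖ ^ 2 ∂μ ≤
        (2 / (finrank ℝ E - 2)) ^ 2 * ∫ x, ‖fderiv ℝ g x‖ ^ 2 ∂μ := by
  have : FiniteDimensional ℝ E := finite_of_finrank_pos (by lia)
  have : Nontrivial E := nontrivial_of_finrank_pos (R := ℝ) (by lia)
  have hconst : 0 < ((finrank ℝ E - 2) / 2 : ℝ) ^ 2 := by
    have : (2 : ℝ) < finrank ℝ E := by exact_mod_cast hE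
    have : 0 < (finrank ℝ E - 2 : ℝ) := by linarith
    positivity
  have hε (n : ℕ) : (0 : ℝ) < 1 / (n + 1) := Nat.one_div_pos_of_nat
  have hlim : ∀ᵐ x ∂μ, Tendsto (fun n : ℕ => hardyWeight (1 / (n + 1)) g x) atTop
      (𝓝 (‖g x‖ ^ 2 / ‖x‖ ^ 2)) := by
    filter_upwards [Measure.ae_ne μ 0] with x hx
    rw [← hardyWeight_zero]
    exact (tendsto_hardyWeight g hx).comp (tendsto_one_div_add_atTop_nhds_zero_nat (𝕜 := ℝ))
  refine integrable_and_integral_le_of_tendsto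
    (fun n => integrable_hardyWeight_of_pos μ (hε n) hg.continuous hc)
    (fun n => .of_forall (hardyWeight_nonneg (hε n).le g)) (fun n => ?_) hlim
  rw [← inv_div _ (2 : ℝ), inv_pow, ← div_eq_inv_mul, le_div_iff₀' hconst]
  exact integral_hardyWeight_le_of_pos μ hE hg hc (hε n)

end Hardy

section UnitVectorMultiplier

variable {E F ι : Type*} [NormedAddCommGroup E] [InnerProductSpace ℝ E] [MeasurableSpace E]
  [BorelSpace E] (μ : Measure E) [μ.IsAddHaarMeasure] [NormedAddCommGroup F]
  [InnerProductSpace ℝ F] [Fintype ι] (b : OrthonormalBasis ι ℝ E) {g : E → F}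

theorem integrable_and_integral_sum_frobeniusNormSq_fderiv_inner_normalize_smul
    (hE : 2 < finrank ℝ E) (hg : ContDiff ℝ 1 g) (hc : HasCompactSupport g) :
    Integrable (fun x => ∑ i, frobeniusNormSq b
        (fderiv ℝ (fun z => ⟪b i, NormedSpace.normalize z⟫ • g z) x)) μ ∧
      ∫ x, ∑ i, frobeniusNormSq b
          (fderiv ℝ (fun z => ⟪b i, NormedSpace.normalize z⟫ • g z) x) ∂μ =
        (∫ x, frobeniusNormSq b (fderiv ℝ g x) ∂μ) +
          (finrank ℝ E - 1) * ∫ x, ‖g x‖ ^ 2 / ‖x‖ ^ 2 ∂μ := by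
  have : FiniteDimensional ℝ E := finite_of_finrank_pos (by lia)
  have : Nontrivial E := nontrivial_of_finrank_pos (R := ℝ) (by lia)
  have hg_int := integrable_frobeniusNormSq_fderiv μ b hg hc
  have hw_int := (hardy_inequality_s5 μ hE hg hc).1.const_mul (finrank ℝ E - 1 : ℝ)
  have hsplit : (fun x => ∑ i, frobeniusNormSq b
        (fderiv ℝ (fun z => ⟪b i, NormedSpace.normalize z⟫ • g z) x)) =ᵐ[μ]
      fun x => frobeniusNormSq b (fderiv ℝ g x) + (finrank ℝ E - 1) * (‖g x‖ ^ 2 / ‖x‖ ^ 2) := by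
    filter_upwards [Measure.ae_ne μ 0] with x hx
    exact sum_frobeniusNormSq_fderiv_inner_normalize_smul b hx (hg.differentiable one_ne_zero x)
  refine ⟨(hg_int.add hw_int).congr hsplit.symm, ?_⟩
  rw [integral_congr_ae hsplit, integral_add hg_int hw_int, integral_const_mul]

theorem unit_vector_multiplier_H1_general (hE : 2 < finrank ℝ E) (hg : ContDiff ℝ 1 g)
    (hc : HasCompactSupport g) :
    Integrable (fun x => ∑ i, frobeniusNormSq b
        (fderiv ℝ (fun z => ⟪b i, NormedSpace.normalize z⟫ • g z) x)) μ ∧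
      √(∫ x, ∑ i, frobeniusNormSq b
          (fderiv ℝ (fun z => ⟪b i, NormedSpace.normalize z⟫ • g z) x) ∂μ) ≤
        finrank ℝ E / (finrank ℝ E - 2) * √(∫ x, frobeniusNormSq b (fderiv ℝ g x) ∂μ) := by
  have hd : 0 < (finrank ℝ E - 2 : ℝ) := by
    rw [sub_pos]
    exact_mod_cast hE
  obtain ⟨h_int, hident⟩ :=
    integrable_and_integral_sum_frobeniusNormSq_fderiv_inner_normalize_smul μ b hE hg hc
  refine ⟨h_int, Real.sqrt_le_iff.mpr ⟨by positivity, ?_⟩⟩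
  rw [hident, mul_pow, Real.sq_sqrt (integral_nonneg fun x => frobeniusNormSq_nonneg b _)]
  set G := ∫ x, frobeniusNormSq b (fderiv ℝ g x) ∂μ
  calc G + (finrank ℝ E - 1) * ∫ x, ‖g x‖ ^ 2 / ‖x‖ ^ 2 ∂μ
      ≤ G + (finrank ℝ E - 1) *
          ((2 / (finrank ℝ E - 2)) ^ 2 * ∫ x, ‖fderiv ℝ g x‖ ^ 2 ∂μ) := by
        gcongr
        · linarith
        · exact (hardy_inequality_s5 μ hE hg hc).2
    _ ≤ G + (finrank ℝ E - 1) * ((2 / (finrank ℝ E - 2)) ^ 2 * G) := by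
        gcongr
        · linarith
        · exact integral_norm_sq_fderiv_le_integral_frobeniusNormSq μ b hg hc
    _ = (finrank ℝ E / (finrank ℝ E - 2)) ^ 2 * G := by
        field_simp
        ring

end UnitVectorMultiplier

/-- There is `C > 0` so that for every smooth compactly supported
`g : ℝ³ → ℂ` whose support avoids the origin, `h(x) = (x/|x|) g(x)` satisfies
`‖∇h‖_{L²} ≤ C ‖∇g‖_{L²}`, with the Frobenius norm on the derivative matrix of `h`. -/
theorem unit_vector_multiplier_H1 :
    ∃ C > (0:ℝ), ∀ g : E3 → ℂ, ContDiff ℝ ∞ g → HasCompactSupport g →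
      (0 : E3) ∉ tsupport g →
      Real.sqrt (∫ x : E3, ∑ i : Fin 3, ∑ j : Fin 3,
          Complex.normSq (pd (fun z : E3 => ((z i / ‖z‖ : ℝ) : ℂ) * g z) j x))
        ≤ C * Real.sqrt (∫ x : E3, ∑ i : Fin 3, Complex.normSq (pd g i x)) := by
  refine ⟨3 / (3 - 2), by norm_num, fun g hg hc _ => ?_⟩
  simpa [pd, e3, frobeniusNormSq, NormedSpace.normalize, real_inner_smul_right,
    Complex.normSq_eq_norm_sq, div_eq_inv_mul, EuclideanSpace.inner_single_left] using
    (unit_vector_multiplier_H1_general volume (EuclideanSpace.basisFun (Fin 3) ℝ) (by simp)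
      (hg.of_le (by simp)) hc).2
end
end
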